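/- Let r be an even positive integer, let 𝒫 be the set of separable polynomials P ∈ ℤ[T] of degree r or r−1 whose content is squarefree, and for H ≥ 1 let 𝒫_H be the subset of those of height at most H. Then there exists a subset S of 𝒫 such that: (a) |S ∩ 𝒫_H| / |𝒫_H| = 1 − O(log H / √H) as H → ∞; and (b) for every P ∈ S, writing a for the leading coefficient of P, there exists a constant α with 0 < α < 1 such that the number of squarefree integers d ∉ {0,1} with |d| ≤ x for which either there exists t₀ ∈ ℚ with P(t₀) ≠ 0 and d·P(t₀) a nonzero square in ℚ, or deg P = r (even) and d·a is a nonzero square in ℚ, is O(x · (log x)^{−α}) as x → ∞. -/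

import Mathlib

/-!
The set `S` consists of the irreducible polynomials of degree exactly `r`.

A separable polynomial outside `S` has degree less than `r` or is reducible. There are `O(H ^ r)`
polynomials of the first kind of height at most `H`. By Gauss's lemma a reducible polynomial factors
over `ℤ` as `Q * R`, and by Gelfond's inequality (the Mahler measure is multiplicative) the product
of the heights of `Q` and `R` is `O(H)`; a dyadic decomposition of the height of `Q` leaves
`O(H ^ r log H)` pairs. As a positive proportion of all polynomials of degree `r` have squarefree
content, the exceptional proportion is even `O(log H / H)`.

Now let `P` be irreducible of even degree, and let `d` be squarefree with `d P(u / v)` a nonzero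
square. As the degree is even, `v ^ deg P` is a square too, so every prime `p ∣ d` divides the value
of the homogenization of `P` at `(u, v)`, that is, `P` has a root in `ℙ¹(𝔽_p)`. By Kummer–Dedekind,
all but finitely many such `p` lie below a prime of degree one of `K = ℚ[T] / (P)`. The pole of the
Dedekind zeta function of `K` bounds the sum of `N(𝔭)^{-s}` over these primes `𝔭`, and two distinct
embeddings of `K` into the splitting field `L` of `P` show that almost every `p` below a degree-one
prime of `L` is counted twice. As these `p` have positive density, the primes allowed to divide `d`
have upper Dirichlet density at most `1 - β` with `β > 0`, and a Chebyshev-type argument bounds the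
number of squarefree `d` with `|d| ≤ x` built from them by `O(x (log x)^{-β})`.
-/

open Polynomial Filter Asymptotics

/-- The height of `P` (max of the absolute values of the coefficients) is at most `H`. -/
def HeightLE (P : Polynomial ℤ) (H : ℕ) : Prop := ∀ i, |P.coeff i| ≤ (H : ℤ)

/-- `d` is a squarefree integer with `d ∉ {0,1}`. -/
def SqfInt (d : ℤ) : Prop :=
  d ≠ 0 ∧ d ≠ 1 ∧ ∀ p : ℕ, p.Prime → ¬ ((p : ℤ) ^ 2 ∣ d)

/-- Separable integer polynomials of degree `r` or `r-1` with squarefree content. -/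
def P2Set (r : ℕ) : Set (Polynomial ℤ) :=
  {P | (P.natDegree = r ∨ P.natDegree = r - 1) ∧ P ≠ 0 ∧
    (P.map (Int.castRingHom ℚ)).Separable ∧ Squarefree P.content}

section

open NumberField Ideal IsDedekindDomain Topology

/-! ### Euler products -/

lemma prod_sum_eq_sum_finsupp {ι M : Type*} [CommSemiring M] (F : Finset ι) (t : ι → Finset ℕ)
    (x : ι → M) : ∏ i ∈ F, ∑ k ∈ t i, x i ^ k = ∑ e ∈ F.finsupp t, e.prod fun i k => x i ^ k := by
  classical
  rw [Finset.prod_sum, Finset.finsupp, Finset.sum_map]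
  refine Finset.sum_congr rfl fun e _ => ?_
  refine Eq.trans ?_ (Finsupp.prod_of_support_subset _ (Finsupp.support_indicator_subset F e) _
    fun i _ => pow_zero (x i)).symm
  rw [← Finset.prod_attach F]
  exact Finset.prod_congr rfl fun i _ => by rw [Finsupp.indicator_of_mem i.2]

section EulerProduct

variable {ι : Type*} {x : ι → ℝ}

lemma finsuppProd_pow_nonneg (hx : ∀ i, 0 ≤ x i) (e : ι →₀ ℕ) :
    0 ≤ e.prod fun i k => x i ^ k :=
  Finset.prod_nonneg fun i _ => pow_nonneg (hx i) _

lemma summable_of_summable_finsuppProd (h : Summable fun e : ι →₀ ℕ => e.prod fun i k => x i ^ k) :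
    Summable x := by
  refine (h.comp_injective (i := fun i => Finsupp.single i 1)
    (Finsupp.single_left_injective one_ne_zero)).congr fun i => ?_
  simp

lemma exp_tsum_le_tsum_finsuppProd (hx₀ : ∀ i, 0 ≤ x i) (hx₁ : ∀ i, x i ≤ 1)
    (h : Summable fun e : ι →₀ ℕ => e.prod fun i k => x i ^ k) :
    Real.exp (∑' i, x i) ≤ ∑' e : ι →₀ ℕ, e.prod fun i k => x i ^ k := by
  have hexp : ∀ i, Real.exp (x i) ≤ ∑ k ∈ Finset.range 3, x i ^ k := fun i => by
    have := (abs_le.1 (Real.abs_exp_sub_one_sub_id_le (x := x i)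
      (abs_le.2 ⟨by linarith [hx₀ i], hx₁ i⟩))).2
    simp only [Finset.sum_range_succ, Finset.sum_range_zero]
    linarith [pow_zero (x i), pow_one (x i)]
  refine le_of_tendsto ((Real.continuous_exp.tendsto _).comp
    (summable_of_summable_finsuppProd h).hasSum) (Eventually.of_forall fun F => ?_)
  calc Real.exp (∑ i ∈ F, x i) ≤ ∏ i ∈ F, ∑ k ∈ Finset.range 3, x i ^ k := by
        rw [Real.exp_sum]
        exact Finset.prod_le_prod (fun _ _ => (Real.exp_pos _).le) fun i _ => hexp i
    _ = ∑ e ∈ F.finsupp fun _ => Finset.range 3, e.prod fun i k => x i ^ k :=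
        prod_sum_eq_sum_finsupp F _ x
    _ ≤ _ := h.sum_le_tsum _ fun e _ => finsuppProd_pow_nonneg hx₀ e

lemma sum_range_pow_le_exp {y : ℝ} (h₀ : 0 ≤ y) (h₁ : y ≤ 1 / 2) (n : ℕ) :
    ∑ k ∈ Finset.range n, y ^ k ≤ Real.exp (y + 2 * y ^ 2) := by
  calc ∑ k ∈ Finset.range n, y ^ k ≤ (1 - y)⁻¹ := by
        rw [← tsum_geometric_of_lt_one h₀ (by linarith)]
        exact (summable_geometric_of_lt_one h₀ (by linarith)).sum_le_tsum _
          fun _ _ => pow_nonneg h₀ _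
    _ ≤ y + 2 * y ^ 2 + 1 := by
        rw [inv_le_iff_one_le_mul₀ (by linarith)]
        nlinarith [mul_nonneg (sq_nonneg y) (by linarith : 0 ≤ 1 - 2 * y)]
    _ ≤ _ := Real.add_one_le_exp _

lemma tsum_finsuppProd_le_exp_tsum (hx₀ : ∀ i, 0 ≤ x i) (hx₁ : ∀ i, x i ≤ 1 / 2)
    (h : Summable x) :
    ∑' e : ι →₀ ℕ, (e.prod fun i k => x i ^ k) ≤ Real.exp (∑' i, (x i + 2 * x i ^ 2)) := by
  classical
  have hsum : Summable fun i => x i + 2 * x i ^ 2 :=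
    h.add ((h.of_nonneg_of_le (fun i => sq_nonneg (x i)) fun i => by
      nlinarith [hx₀ i, hx₁ i]).mul_left 2)
  refine Real.tsum_le_of_sum_le (finsuppProd_pow_nonneg hx₀) fun T => ?_
  set F := T.biUnion Finsupp.support
  set n := T.sup (fun e => F.sup e) + 1
  have hT : T ⊆ F.finsupp fun _ => Finset.range n := fun e he => by
    refine Finset.mem_finsupp_iff.2 ⟨Finset.subset_biUnion_of_mem _ he, fun i hi => ?_⟩
    exact Finset.mem_range_succ_iff.2
      ((Finset.le_sup (f := e) hi).trans
        (Finset.le_sup (f := fun e : ι →₀ ℕ => F.sup e) he))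
  calc ∑ e ∈ T, (e.prod fun i k => x i ^ k)
      ≤ ∑ e ∈ F.finsupp fun _ => Finset.range n, e.prod fun i k => x i ^ k :=
        Finset.sum_le_sum_of_subset_of_nonneg hT fun e _ _ => finsuppProd_pow_nonneg hx₀ e
    _ = ∏ i ∈ F, ∑ k ∈ Finset.range n, x i ^ k := (prod_sum_eq_sum_finsupp F _ x).symm
    _ ≤ Real.exp (∑ i ∈ F, (x i + 2 * x i ^ 2)) := by
        rw [Real.exp_sum]
        exact Finset.prod_le_prod (fun i _ => Finset.sum_nonneg fun _ _ => pow_nonneg (hx₀ i) _)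
          fun i _ => sum_range_pow_le_exp (hx₀ i) (hx₁ i) n
    _ ≤ _ := Real.exp_le_exp.2 (hsum.sum_le_tsum _ fun i _ => by have := hx₀ i; positivity)

end EulerProduct

section IdealFactorization

variable {R : Type*} [CommRing R] [IsDedekindDomain R]

lemma emultiplicity_finsuppProd_asIdeal_pow (e : HeightOneSpectrum R →₀ ℕ)
    (v : HeightOneSpectrum R) :
    emultiplicity v.asIdeal (e.prod fun w k => w.asIdeal ^ k) = e v := by
  classical
  have hmul (w : HeightOneSpectrum R) : emultiplicity v.asIdeal (w.asIdeal ^ e w) =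
      if w = v then (e v : ℕ∞) else 0 := by
    split_ifs with h
    · subst h
      exact emultiplicity_pow_self w.ne_bot w.prime.not_isUnit _
    · refine emultiplicity_eq_zero.2 fun hdvd => h (HeightOneSpectrum.ext ?_)
      exact (associated_iff_eq.1 (v.prime.associated_of_dvd w.prime
        (v.prime.dvd_of_dvd_pow hdvd))).symm
  rw [Finsupp.prod, Finset.emultiplicity_prod v.prime, Finset.sum_congr rfl fun w _ => hmul w,
    Finset.sum_ite_eq']
  split_ifs with h
  · rfl
  · rw [Finsupp.notMem_support_iff.1 h, Nat.cast_zero]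

lemma exists_finsuppProd_asIdeal_pow_eq {I : Ideal R} (hI : I ≠ ⊥) :
    ∃ e : HeightOneSpectrum R →₀ ℕ, (e.prod fun v k => v.asIdeal ^ k) = I := by
  classical
  induction I using UniqueFactorizationMonoid.induction_on_prime with
  | h₁ => exact absurd rfl hI
  | h₂ J hJ => exact ⟨0, by simp [isUnit_iff_eq_one.1 hJ]⟩
  | h₃ J P hJ hP ih =>
    obtain ⟨e, he⟩ := ih hJ
    refine ⟨Finsupp.single ⟨P, Ideal.isPrime_of_prime hP, hP.ne_zero⟩ 1 + e, ?_⟩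
    rw [Finsupp.prod_add_index' (fun _ => pow_zero _) (fun _ => pow_add _),
      he,
      Finsupp.prod_single_index (h := fun (v : HeightOneSpectrum R) k => v.asIdeal ^ k)
        (pow_zero _), pow_one]

/-- Unique factorization of ideals: a nonzero ideal of a Dedekind domain is encoded by the
exponents of its prime factors. -/
noncomputable def finsuppEquivIdeal (R : Type*) [CommRing R] [IsDedekindDomain R] :
    (HeightOneSpectrum R →₀ ℕ) ≃ {I : Ideal R // I ≠ ⊥} :=
  Equiv.ofBijective (fun e => ⟨e.prod fun v k => v.asIdeal ^ k,
      Finset.prod_ne_zero_iff.2 fun v _ => pow_ne_zero _ v.ne_bot⟩)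
    ⟨fun e e' h => Finsupp.ext fun v => by
        have := congrArg (emultiplicity v.asIdeal) (Subtype.ext_iff.1 h)
        simpa only [emultiplicity_finsuppProd_asIdeal_pow, Nat.cast_inj] using this,
      fun I => (exists_finsuppProd_asIdeal_pow_eq I.2).imp fun _ he => Subtype.ext he⟩

lemma map_finsuppEquivIdeal {M : Type*} [CommMonoid M] (f : Ideal R →* M)
    (e : HeightOneSpectrum R →₀ ℕ) :
    f (finsuppEquivIdeal R e) = e.prod fun v k => f v.asIdeal ^ k := by
  refine (map_finsuppProd f e _).trans ?_
  simp only [map_pow]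

end IdealFactorization

/-! ### The Dedekind zeta function near its pole -/

lemma tsum_comp_eq_tsum_natCard_mul {α β : Type*} {N : α → β} (hN : ∀ b, (N ⁻¹' {b}).Finite)
    {g : β → ℝ} (hg : ∀ b, 0 ≤ g b) :
    ∑' a, g (N a) = ∑' b, Nat.card (N ⁻¹' {b}) * g b := by
  have hfiber (b : β) : ∑' a : N ⁻¹' {b}, ENNReal.ofReal (g (N a)) =
      ENNReal.ofReal (Nat.card (N ⁻¹' {b}) * g b) := by
    have := (hN b).to_subtype
    have hconst (a : N ⁻¹' {b}) : ENNReal.ofReal (g (N a)) = ENNReal.ofReal (g b) :=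
      congrArg (fun c => ENNReal.ofReal (g c)) a.2
    rw [tsum_congr hconst, ENNReal.tsum_const, ENat.card_eq_coe_natCard,
      ENNReal.ofReal_mul (Nat.cast_nonneg _), ENNReal.ofReal_natCast, ENat.toENNReal_coe]
  have h := congrArg ENNReal.toReal (ENNReal.tsum_fiberwise (fun a => ENNReal.ofReal (g (N a))) N)
  simp only [hfiber] at h
  rw [ENNReal.tsum_toReal_eq fun _ => ENNReal.ofReal_ne_top,
    ENNReal.tsum_toReal_eq fun _ => ENNReal.ofReal_ne_top] at h
  refine (Eq.trans ?_ h.symm).trans (tsum_congr fun b => ?_)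
  · exact tsum_congr fun a => (ENNReal.toReal_ofReal (hg _)).symm
  · exact ENNReal.toReal_ofReal (mul_nonneg (Nat.cast_nonneg _) (hg b))

section DedekindZeta

variable (K : Type*) [Field K] [NumberField K]

/-- The completely multiplicative weight `I ↦ N(I)^{-s}` on ideals. -/
noncomputable def absNormRpow (s : ℝ) : Ideal (𝓞 K) →* ℝ where
  toFun I := (absNorm I : ℝ) ^ (-s)
  map_one' := by simp
  map_mul' I J := by
    rw [map_mul, Nat.cast_mul, Real.mul_rpow (Nat.cast_nonneg _) (Nat.cast_nonneg _)]

lemma dedekindZeta_ofReal (s : ℝ) :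
    dedekindZeta K s = ((∑' I : {I : Ideal (𝓞 K) // I ≠ ⊥}, (absNorm I.1 : ℝ) ^ (-s) : ℝ) : ℂ) := by
  let N : {I : Ideal (𝓞 K) // I ≠ ⊥} → ℕ := fun I => absNorm I.1
  have hN (n : ℕ) : (N ⁻¹' {n}).Finite :=
    Set.Finite.of_finite_image ((finite_setOfPred_absNorm_eq n).subset
      (by rintro _ ⟨I, hI, rfl⟩; exact hI)) Subtype.val_injective.injOn
  have hcard {n : ℕ} (hn : n ≠ 0) :
      Nat.card (N ⁻¹' {n}) = Nat.card {I : Ideal (𝓞 K) // absNorm I = n} :=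
    Nat.card_congr (Equiv.subtypeSubtypeEquivSubtype (q := fun I => absNorm I = n) (by
      rintro _ rfl rfl; exact hn absNorm_bot))
  rw [dedekindZeta, LSeries, tsum_comp_eq_tsum_natCard_mul hN (g := fun n => (n : ℝ) ^ (-s))
    fun n => by positivity, Complex.ofReal_tsum]
  refine tsum_congr fun n => ?_
  rw [LSeries.term_def]
  split_ifs with hn
  · have : IsEmpty (N ⁻¹' {n}) := ⟨fun I => I.1.2 (absNorm_eq_zero_iff.1 (I.2.trans hn))⟩
    simp
  · rw [hcard hn, Real.rpow_neg (Nat.cast_nonneg _), Complex.ofReal_mul, Complex.ofReal_inv,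
      Complex.ofReal_cpow (Nat.cast_nonneg _), div_eq_mul_inv]
    simp

lemma tendsto_sub_one_mul_tsum_absNorm_rpow :
    Tendsto (fun s : ℝ => (s - 1) * ∑' I : {I : Ideal (𝓞 K) // I ≠ ⊥}, (absNorm I.1 : ℝ) ^ (-s))
      (𝓝[>] 1) (𝓝 (dedekindZeta_residue K)) := by
  have h := (Complex.continuous_re.tendsto _).comp (tendsto_sub_one_mul_dedekindZeta_nhdsGT K)
  rw [Complex.ofReal_re] at h
  refine h.congr fun s => ?_
  rw [Function.comp_apply, dedekindZeta_ofReal, ← Complex.ofReal_one, ← Complex.ofReal_sub,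
    ← Complex.ofReal_mul, Complex.ofReal_re]

variable {K} in
lemma one_le_absNorm {I : Ideal (𝓞 K)} (hI : I ≠ ⊥) : (1 : ℝ) ≤ absNorm I :=
  Nat.one_le_cast.2 (Nat.one_le_iff_ne_zero.2 (absNorm_eq_zero_iff.not.2 hI))

lemma summable_absNorm_rpow {s : ℝ} (hs : 1 < s) :
    Summable fun I : {I : Ideal (𝓞 K) // I ≠ ⊥} => (absNorm I.1 : ℝ) ^ (-s) := by
  -- Near the pole the sum is nonzero, so it is not the junk value of a divergent series.
  obtain ⟨t, ⟨ht, -⟩, hts⟩ := ((tendsto_sub_one_mul_tsum_absNorm_rpow K).eventually_ne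
    (dedekindZeta_residue_ne_zero K)).and self_mem_nhdsWithin |>.and
      (Ioo_mem_nhdsGT hs) |>.exists
  have hsum : Summable fun I : {I : Ideal (𝓞 K) // I ≠ ⊥} => (absNorm I.1 : ℝ) ^ (-t) := by
    by_contra h
    exact ht (by rw [tsum_eq_zero_of_not_summable h, mul_zero])
  refine hsum.of_nonneg_of_le (fun I => by positivity) fun I => ?_
  exact Real.rpow_le_rpow_of_exponent_le (one_le_absNorm I.2) (by linarith [hts.2])

lemma summable_finsuppProd_absNormRpow {s : ℝ} (hs : 1 < s) :
    Summable fun e : HeightOneSpectrum (𝓞 K) →₀ ℕ => e.prod fun v k =>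
      absNormRpow K s v.asIdeal ^ k :=
  ((finsuppEquivIdeal (𝓞 K)).summable_iff.2 (summable_absNorm_rpow K hs)).congr fun e =>
    map_finsuppEquivIdeal (absNormRpow K s) e

lemma tsum_finsuppProd_absNormRpow (s : ℝ) :
    ∑' e : HeightOneSpectrum (𝓞 K) →₀ ℕ, (e.prod fun v k => absNormRpow K s v.asIdeal ^ k) =
      ∑' I : {I : Ideal (𝓞 K) // I ≠ ⊥}, (absNorm I.1 : ℝ) ^ (-s) := by
  rw [← (finsuppEquivIdeal (𝓞 K)).tsum_eq]
  exact tsum_congr fun e => (map_finsuppEquivIdeal (absNormRpow K s) e).symm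

variable {K} in
lemma absNorm_rpow_le_half (v : HeightOneSpectrum (𝓞 K)) {s : ℝ} (hs : 1 ≤ s) :
    (absNorm v.asIdeal : ℝ) ^ (-s) ≤ 1 / 2 := by
  have htwo : (2 : ℝ) ≤ absNorm v.asIdeal := by
    have h₀ := absNorm_eq_zero_iff.not.2 v.ne_bot
    have h₁ := absNorm_eq_one_iff.not.2 v.isPrime.ne_top
    exact_mod_cast (by omega : 2 ≤ absNorm v.asIdeal)
  calc (absNorm v.asIdeal : ℝ) ^ (-s) ≤ (absNorm v.asIdeal : ℝ) ^ (-1 : ℝ) :=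
        Real.rpow_le_rpow_of_exponent_le (by linarith) (by linarith)
    _ ≤ 1 / 2 := by
        rw [Real.rpow_neg_one, one_div]
        exact inv_anti₀ two_pos htwo

lemma summable_heightOneSpectrum_absNorm_rpow {s : ℝ} (hs : 1 < s) :
    Summable fun v : HeightOneSpectrum (𝓞 K) => (absNorm v.asIdeal : ℝ) ^ (-s) :=
  summable_of_summable_finsuppProd (summable_finsuppProd_absNormRpow K hs)

lemma log_tsum_absNorm_rpow_mem_Icc {s : ℝ} (hs : 1 < s) :
    Real.log (∑' I : {I : Ideal (𝓞 K) // I ≠ ⊥}, (absNorm I.1 : ℝ) ^ (-s)) ∈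
      Set.Icc (Set.primeIdealZetaSum (Set.univ : Set (HeightOneSpectrum (𝓞 K))) s)
        (Set.primeIdealZetaSum (Set.univ : Set (HeightOneSpectrum (𝓞 K))) s +
          2 * ∑' v : HeightOneSpectrum (𝓞 K), (absNorm v.asIdeal : ℝ) ^ (-2 : ℝ)) := by
  have hx₀ (v : HeightOneSpectrum (𝓞 K)) : 0 ≤ absNormRpow K s v.asIdeal :=
    Real.rpow_nonneg (Nat.cast_nonneg _) _
  have hx₁ (v : HeightOneSpectrum (𝓞 K)) : absNormRpow K s v.asIdeal ≤ 1 / 2 :=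
    absNorm_rpow_le_half v hs.le
  have hsum := summable_heightOneSpectrum_absNorm_rpow K hs
  have hsq (v : HeightOneSpectrum (𝓞 K)) :
      absNormRpow K s v.asIdeal ^ 2 ≤ (absNorm v.asIdeal : ℝ) ^ (-2 : ℝ) := by
    change ((absNorm v.asIdeal : ℝ) ^ (-s)) ^ 2 ≤ _
    rw [← Real.rpow_mul_natCast (Nat.cast_nonneg _)]
    exact Real.rpow_le_rpow_of_exponent_le (one_le_absNorm v.ne_bot) (by push_cast; linarith)
  have hsum₂ := summable_heightOneSpectrum_absNorm_rpow K one_lt_two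
  have hlower := exp_tsum_le_tsum_finsuppProd hx₀ (fun v => (hx₁ v).trans (by norm_num))
    (summable_finsuppProd_absNormRpow K hs)
  have hupper := tsum_finsuppProd_le_exp_tsum hx₀ hx₁ hsum
  rw [tsum_finsuppProd_absNormRpow] at hlower hupper
  have hpos := (Real.exp_pos _).trans_le hlower
  rw [Set.primeIdealZetaSum_def, tsum_univ fun v : HeightOneSpectrum (𝓞 K) =>
    (absNorm v.asIdeal : ℝ) ^ (-s)]
  refine ⟨(Real.le_log_iff_exp_le hpos).2 hlower, ((Real.log_le_iff_le_exp hpos).2 hupper).trans ?_⟩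
  rw [← tsum_mul_left, ← hsum.tsum_add (hsum₂.mul_left 2)]
  refine Summable.tsum_mono ?_ (hsum.add (hsum₂.mul_left 2)) fun v => by
    have := hsq v
    change _ + _ ≤ absNormRpow K s v.asIdeal + _
    linarith
  exact hsum.add ((hsum₂.of_nonneg_of_le (fun v => sq_nonneg _) hsq).mul_left 2)

/-- A Mertens-type estimate: the simple pole of the Dedekind zeta function at `s = 1` becomes a
logarithmic singularity of the sum over primes. -/
theorem primeIdealZetaSum_univ_sub_log_isBigO :
    (fun s : ℝ => Set.primeIdealZetaSum (Set.univ : Set (HeightOneSpectrum (𝓞 K))) s -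
      Real.log (s - 1)⁻¹) =O[𝓝[>] 1] fun _ => (1 : ℝ) := by
  have hlim := ((Real.continuousAt_log (dedekindZeta_residue_ne_zero K)).tendsto.comp
    (tendsto_sub_one_mul_tsum_absNorm_rpow K)).isBigO_one ℝ
  set q := 2 * ∑' v : HeightOneSpectrum (𝓞 K), (absNorm v.asIdeal : ℝ) ^ (-2 : ℝ)
  have hdiff : (fun s : ℝ => Set.primeIdealZetaSum (Set.univ : Set (HeightOneSpectrum (𝓞 K))) s -
      Real.log (∑' I : {I : Ideal (𝓞 K) // I ≠ ⊥}, (absNorm I.1 : ℝ) ^ (-s)))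
      =O[𝓝[>] 1] fun _ => (1 : ℝ) := by
    refine IsBigO.of_bound q (eventually_mem_nhdsWithin.mono fun s hs => ?_)
    obtain ⟨h₁, h₂⟩ := log_tsum_absNorm_rpow_mem_Icc K hs
    rw [norm_one, mul_one, Real.norm_eq_abs, abs_le]
    constructor <;> linarith
  refine (hdiff.add hlim).congr' ?_ EventuallyEq.rfl
  filter_upwards [(tendsto_sub_one_mul_tsum_absNorm_rpow K).eventually_ne
    (dedekindZeta_residue_ne_zero K)] with s hs
  rw [Function.comp_apply, Real.log_mul (left_ne_zero_of_mul hs) (right_ne_zero_of_mul hs),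
    Real.log_inv]
  ring

end DedekindZeta

/-! ### Primes of degree one -/

/-- The set `A` of natural numbers has upper Dirichlet density at most `δ`, in the strong sense that
the error term is bounded: `∑_{p ∈ A} p^{-s} ≤ δ log (1 / (s - 1)) + O(1)` as `s → 1⁺`. -/
def UpperDirichletDensityLE (A : Set ℕ) (δ : ℝ) : Prop :=
  ∃ C : ℝ, ∀ᶠ s : ℝ in 𝓝[>] 1, ∑' p : A, (p : ℝ) ^ (-s) ≤ δ * Real.log (s - 1)⁻¹ + C

lemma tsum_rpow_neg_le_ncard {E : Set ℕ} (hE : E.Finite) {s : ℝ} (hs : 0 < s) :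
    ∑' p : E, (p : ℝ) ^ (-s) ≤ E.ncard := by
  have := hE.to_subtype
  calc ∑' p : E, (p : ℝ) ^ (-s) ≤ ∑' _ : E, (1 : ℝ) := by
        refine Summable.of_finite.tsum_mono Summable.of_finite fun p => ?_
        rcases p.1.eq_zero_or_pos with hp | hp
        · simp [hp, Real.zero_rpow (neg_ne_zero.2 hs.ne')]
        · exact Real.rpow_le_one_of_one_le_of_nonpos (Nat.one_le_cast.2 hp) (by linarith)
    _ = E.ncard := by simp [Set.ncard]

lemma tsum_rpow_neg_le_add_ncard {A B E : Set ℕ} (hE : E.Finite) (h : A ⊆ B ∪ E) {s : ℝ}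
    (hs : 1 < s) :
    ∑' p : A, (p : ℝ) ^ (-s) ≤ ∑' p : B, (p : ℝ) ^ (-s) + E.ncard := by
  have hsum (S : Set ℕ) : Summable (S.indicator fun p : ℕ => (p : ℝ) ^ (-s)) :=
    (Real.summable_nat_rpow.2 (neg_lt_neg hs)).indicator S
  grw [← tsum_rpow_neg_le_ncard hE (zero_lt_one.trans hs)]
  rw [tsum_subtype A fun p : ℕ => (p : ℝ) ^ (-s), tsum_subtype B fun p : ℕ => (p : ℝ) ^ (-s),
    tsum_subtype E fun p : ℕ => (p : ℝ) ^ (-s), ← (hsum B).tsum_add (hsum E)]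
  refine (hsum A).tsum_mono ((hsum B).add (hsum E)) fun p => ?_
  rw [← Set.indicator_union_add_inter_apply]
  refine (Set.indicator_le_indicator_of_subset h (fun p => by positivity) p).trans
    (le_add_of_nonneg_right (Set.indicator_nonneg (fun p _ => by positivity) p))

lemma UpperDirichletDensityLE.of_subset_union_finite {A B E : Set ℕ} {δ : ℝ}
    (hB : UpperDirichletDensityLE B δ) (hE : E.Finite) (h : A ⊆ B ∪ E) :
    UpperDirichletDensityLE A δ := by
  obtain ⟨C, hC⟩ := hB
  refine ⟨C + E.ncard, ?_⟩
  filter_upwards [hC, self_mem_nhdsWithin] with s hs hs₁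
  linarith [tsum_rpow_neg_le_add_ncard hE h hs₁]

lemma absNorm_under_heightOneSpectrum_prime {R : Type*} [CommRing R] [IsDomain R] [CharZero R]
    [Algebra.IsIntegral ℤ R] (v : HeightOneSpectrum R) : (absNorm (under ℤ v.asIdeal)).Prime :=
  have : NeZero v.asIdeal := ⟨v.ne_bot⟩
  Nat.absNorm_under_prime v.asIdeal

lemma ncard_primesOver_le_finrank {R : Type*} [CommRing R] [IsDomain R] (p : Ideal R) [p.IsPrime]
    (S : Type*) [CommRing S] [Algebra R S] [Module.Finite R S] [Module.Flat R S] :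
    (p.primesOver S).ncard ≤ Module.finrank R S := by
  have : Fintype (p.primesOver S) := (Algebra.QuasiFinite.finite_primesOver p).fintype
  rw [← sum_ramification_inertia_eq_finrank p S, ← Nat.card_coe_set_eq, Nat.card_eq_fintype_card,
    Fintype.card_eq_sum_ones]
  refine Finset.sum_le_sum fun q _ => ?_
  have := q.2.1
  exact Nat.mul_pos (q.1.ramificationIdx_pos R) (q.1.inertiaDeg_pos R)

section PrimeIdeals

variable {K : Type*} [Field K] [NumberField K]

lemma exists_absNorm_eq_absNorm_under_pow (v : HeightOneSpectrum (𝓞 K)) :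
    ∃ f ≠ 0, absNorm v.asIdeal = absNorm (under ℤ v.asIdeal) ^ f := by
  have h := absNorm_eq_pow_inertiaDeg' v.asIdeal (absNorm_under_heightOneSpectrum_prime v)
  refine ⟨_, fun hf => v.isPrime.ne_top (absNorm_eq_one_iff.1 ?_), h⟩
  rw [h, hf, pow_zero]

variable (K) in
lemma finite_ncard_primes_above_le (p : ℕ) :
    {v : HeightOneSpectrum (𝓞 K) | absNorm (under ℤ v.asIdeal) = p}.Finite ∧
      {v : HeightOneSpectrum (𝓞 K) | absNorm (under ℤ v.asIdeal) = p}.ncard ≤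
        Module.finrank ℚ K := by
  set V := {v : HeightOneSpectrum (𝓞 K) | absNorm (under ℤ v.asIdeal) = p}
  rcases V.eq_empty_or_nonempty with hV | ⟨v, hv⟩
  · simp [hV]
  set 𝔭 := under ℤ v.asIdeal
  have hmaps : Set.MapsTo HeightOneSpectrum.asIdeal V (𝔭.primesOver (𝓞 K)) := fun w hw => by
    refine ⟨w.isPrime, ⟨?_⟩⟩
    rw [← Int.ideal_span_absNorm_eq_self 𝔭, hv, ← hw]
    exact Int.ideal_span_absNorm_eq_self _
  have hinj : Set.InjOn HeightOneSpectrum.asIdeal V := fun _ _ _ _ h => HeightOneSpectrum.ext h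
  have hfin := Algebra.QuasiFinite.finite_primesOver (S := 𝓞 K) 𝔭
  refine ⟨Set.Finite.of_injOn hmaps hinj hfin, ?_⟩
  calc V.ncard ≤ (𝔭.primesOver (𝓞 K)).ncard := Set.ncard_le_ncard_of_injOn _ hmaps hinj hfin
    _ ≤ Module.finrank ℤ (𝓞 K) := ncard_primesOver_le_finrank 𝔭 (𝓞 K)
    _ = Module.finrank ℚ K := RingOfIntegers.rank K

/-- The rational primes lying below a prime ideal of degree one of `K`. -/
def degreeOnePrimes (K : Type*) [Field K] [NumberField K] : Set ℕ :=
  {p | p.Prime ∧ ∃ I : Ideal (𝓞 K), absNorm I = p}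

lemma absNorm_rpow_neg_le (v : HeightOneSpectrum (𝓞 K)) {s : ℝ} (hs : 1 ≤ s) :
    (absNorm v.asIdeal : ℝ) ^ (-s) ≤
      (degreeOnePrimes K).indicator (fun p : ℕ => (p : ℝ) ^ (-s)) (absNorm (under ℤ v.asIdeal)) +
        (absNorm (under ℤ v.asIdeal) : ℝ) ^ (-2 : ℝ) := by
  obtain ⟨f, hf, hv⟩ := exists_absNorm_eq_absNorm_under_pow v
  have hp := absNorm_under_heightOneSpectrum_prime v
  set p := absNorm (under ℤ v.asIdeal)
  have hp₁ : (1 : ℝ) ≤ p := Nat.one_le_cast.2 hp.one_le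
  by_cases hf₁ : f = 1
  · have hmem : p ∈ degreeOnePrimes K := ⟨hp, v.asIdeal, by rw [hv, hf₁, pow_one]⟩
    rw [Set.indicator_of_mem hmem, hv, hf₁, pow_one]
    exact le_add_of_nonneg_right (by positivity)
  · refine le_add_of_nonneg_of_le (Set.indicator_nonneg (fun _ _ => by positivity) _) ?_
    have hf₂ : (2 : ℝ) ≤ f := by exact_mod_cast (by omega : 2 ≤ f)
    rw [hv, Nat.cast_pow, ← Real.rpow_natCast_mul (Nat.cast_nonneg _)]
    exact Real.rpow_le_rpow_of_exponent_le hp₁ (by nlinarith)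

variable (K) in
lemma primeIdealZetaSum_univ_le_finrank_mul {s : ℝ} (hs : 1 < s) :
    Set.primeIdealZetaSum (Set.univ : Set (HeightOneSpectrum (𝓞 K))) s ≤
      Module.finrank ℚ K *
        (∑' p : degreeOnePrimes K, (p : ℝ) ^ (-s) + ∑' p : ℕ, (p : ℝ) ^ (-2 : ℝ)) := by
  let q : HeightOneSpectrum (𝓞 K) → ℕ := fun v => absNorm (under ℤ v.asIdeal)
  let g : ℕ → ℝ := fun p =>
    (degreeOnePrimes K).indicator (fun p : ℕ => (p : ℝ) ^ (-s)) p + (p : ℝ) ^ (-2 : ℝ)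
  have hg₀ (p : ℕ) : 0 ≤ g p :=
    add_nonneg (Set.indicator_nonneg (fun _ _ => by positivity) _) (by positivity)
  have hD : Summable ((degreeOnePrimes K).indicator fun p : ℕ => (p : ℝ) ^ (-s)) :=
    (Real.summable_nat_rpow.2 (neg_lt_neg hs)).indicator _
  have htwo : Summable fun p : ℕ => (p : ℝ) ^ (-2 : ℝ) :=
    Real.summable_nat_rpow.2 (by norm_num)
  have hsum : Summable g := hD.add htwo
  have hbound (F : Finset (HeightOneSpectrum (𝓞 K))) :
      ∑ v ∈ F, (absNorm v.asIdeal : ℝ) ^ (-s) ≤ Module.finrank ℚ K * ∑' p, g p := by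
    classical
    calc ∑ v ∈ F, (absNorm v.asIdeal : ℝ) ^ (-s) ≤ ∑ v ∈ F, g (q v) :=
          Finset.sum_le_sum fun v _ => absNorm_rpow_neg_le v hs.le
      _ = ∑ p ∈ F.image q, (F.filter fun v => q v = p).card • g p := Finset.sum_comp g q
      _ ≤ ∑ p ∈ F.image q, Module.finrank ℚ K * g p := by
          refine Finset.sum_le_sum fun p _ => ?_
          obtain ⟨hfin, hle⟩ := finite_ncard_primes_above_le K p
          rw [nsmul_eq_mul]
          refine mul_le_mul_of_nonneg_right (Nat.cast_le.2 (le_trans ?_ hle)) (hg₀ p)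
          rw [← Set.ncard_coe_finset]
          exact Set.ncard_le_ncard (fun v hv => (Finset.mem_filter.1 hv).2) hfin
      _ ≤ Module.finrank ℚ K * ∑' p, g p := by
          rw [← Finset.mul_sum]
          exact mul_le_mul_of_nonneg_left (hsum.sum_le_tsum _ fun p _ => hg₀ p)
            (Nat.cast_nonneg _)
  rw [Set.primeIdealZetaSum_def, tsum_univ fun v : HeightOneSpectrum (𝓞 K) =>
    (absNorm v.asIdeal : ℝ) ^ (-s), tsum_subtype _ fun p : ℕ => (p : ℝ) ^ (-s),
    ← hD.tsum_add htwo]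
  exact Real.tsum_le_of_sum_le (fun v => by positivity) hbound

variable (K) in
lemma log_inv_le_finrank_mul_tsum :
    ∃ C : ℝ, ∀ᶠ s : ℝ in 𝓝[>] 1, Real.log (s - 1)⁻¹ ≤
      Module.finrank ℚ K * ∑' p : degreeOnePrimes K, (p : ℝ) ^ (-s) + C := by
  obtain ⟨C, hC⟩ := (primeIdealZetaSum_univ_sub_log_isBigO K).bound
  refine ⟨C + Module.finrank ℚ K * ∑' p : ℕ, (p : ℝ) ^ (-2 : ℝ), ?_⟩
  filter_upwards [hC, self_mem_nhdsWithin] with s hs hs₁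
  rw [norm_one, mul_one, Real.norm_eq_abs] at hs
  linarith [(abs_le.1 hs).1, primeIdealZetaSum_univ_le_finrank_mul K hs₁]

end PrimeIdeals

lemma exists_intCast_sub_mem {R : Type*} [CommRing R] {I : Ideal R} (hI : (Nat.card (R ⧸ I)).Prime)
    (x : R) : ∃ m : ℤ, x - m ∈ I := by
  have : Fact (Nat.card (R ⧸ I)).Prime := ⟨hI⟩
  have hone : (1 : R ⧸ I) ≠ 0 := fun h => by
    have := subsingleton_of_zero_eq_one h.symm
    exact hI.ne_one Nat.card_unique
  obtain ⟨m, hm⟩ := mem_zmultiples_of_prime_card rfl hone (g' := Ideal.Quotient.mk I x)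
  refine ⟨m, Ideal.Quotient.eq_zero_iff_mem.1 ?_⟩
  rw [map_sub, ← hm]
  simp

lemma tsum_add_tsum_le_tsum {α β γ : Type*} {f : γ → ℝ} (hf : Summable f) (hf₀ : ∀ c, 0 ≤ f c)
    {X : α → γ} {Y : β → γ} (h : (Sum.elim X Y).Injective) :
    ∑' a, f (X a) + ∑' b, f (Y b) ≤ ∑' c, f c := by
  have hinl : X.Injective := h.comp Sum.inl_injective
  have hinr : Y.Injective := h.comp Sum.inr_injective
  refine ((hf.comp_injective hinl).hasSum.sum (f := f ∘ Sum.elim X Y)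
    (hf.comp_injective hinr).hasSum).tsum_eq.ge.trans ?_
  exact (hf.comp_injective h).tsum_le_tsum_of_inj _ h (fun c _ => hf₀ c) (fun _ => le_rfl) hf

section TwoEmbeddings

variable {K L : Type*} [Field K] [NumberField K] [Field L] [NumberField L]

lemma absNorm_comap_of_prime (φ : 𝓞 K →+* 𝓞 L) {J : Ideal (𝓞 L)} (hJ : (absNorm J).Prime) :
    absNorm (J.comap φ) = absNorm J := by
  have hJprime : J.IsPrime := isPrime_of_irreducible_absNorm hJ
  have hdvd : absNorm (J.comap φ) ∣ absNorm J :=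
    AddSubgroup.card_dvd_of_injective (Ideal.quotientMap J φ le_rfl).toAddMonoidHom
      Ideal.quotientMap_injective
  exact ((Nat.dvd_prime hJ).1 hdvd).resolve_left
    (absNorm_eq_one_iff.not.2 (hJprime.comap φ).ne_top)

/-- If `𝔮` has prime norm, then `σ⁻¹ 𝔮` and `τ⁻¹ 𝔮` have the same norm. Were they equal, then
`σ x - τ x ∈ 𝔮` for every `x`, since `x` is congruent to a rational integer modulo `σ⁻¹ 𝔮`. -/
lemma exists_ne_absNorm_eq {σ τ : K →+* L} (hστ : σ ≠ τ) :
    ∃ M ≠ 0, ∀ p ∈ degreeOnePrimes L, ¬ p ∣ M →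
      ∃ I I' : Ideal (𝓞 K), I ≠ I' ∧ absNorm I = p ∧ absNorm I' = p := by
  set φ := RingOfIntegers.mapRingHom σ
  set ψ := RingOfIntegers.mapRingHom τ
  obtain ⟨x, hx⟩ : ∃ x : 𝓞 K, φ x ≠ ψ x := by
    by_contra! h
    refine hστ (IsFractionRing.injective_comp_algebraMap (A := 𝓞 K) (RingHom.ext fun x => ?_))
    exact congrArg (algebraMap (𝓞 L) L) (h x)
  refine ⟨absNorm (Ideal.span {φ x - ψ x}), ?_, ?_⟩
  · rw [Ne, absNorm_eq_zero_iff, Ideal.span_singleton_eq_bot]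
    exact sub_ne_zero.2 hx
  rintro _ ⟨hp, J, rfl⟩ hM
  refine ⟨J.comap φ, J.comap ψ, fun heq => hM (map_dvd absNorm ?_),
    absNorm_comap_of_prime φ hp, absNorm_comap_of_prime ψ hp⟩
  obtain ⟨m, hm⟩ := exists_intCast_sub_mem
    (show (absNorm (J.comap φ)).Prime from (absNorm_comap_of_prime φ hp).symm ▸ hp) x
  have hφ : φ x - m ∈ J := by simpa using hm
  have hψ : ψ x - m ∈ J := by simpa using heq.le hm
  rw [Ideal.dvd_iff_le, Ideal.span_singleton_le_iff_mem]
  simpa using J.sub_mem hφ hψ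

lemma tsum_add_tsum_le_primeIdealZetaSum {D : Set ℕ} (hD : D ⊆ degreeOnePrimes K)
    (htwo : ∀ p ∈ D, ∃ I I' : Ideal (𝓞 K), I ≠ I' ∧ absNorm I = p ∧ absNorm I' = p) {s : ℝ}
    (hs : 1 < s) :
    ∑' p : degreeOnePrimes K, (p : ℝ) ^ (-s) + ∑' p : D, (p : ℝ) ^ (-s) ≤
      Set.primeIdealZetaSum (Set.univ : Set (HeightOneSpectrum (𝓞 K))) s := by
  have hprime {I : Ideal (𝓞 K)} {p : ℕ} (hp : p.Prime) (hI : absNorm I = p) :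
      ∃ v : HeightOneSpectrum (𝓞 K), v.asIdeal = I :=
    ⟨⟨I, isPrime_of_irreducible_absNorm (by rwa [hI]), fun h => hp.ne_zero <| by
      rw [← hI, h, absNorm_bot]⟩, rfl⟩
  have hX (p : degreeOnePrimes K) : ∃ v : HeightOneSpectrum (𝓞 K), absNorm v.asIdeal = p := by
    obtain ⟨I, hI⟩ := p.2.2
    obtain ⟨v, rfl⟩ := hprime p.2.1 hI
    exact ⟨v, hI⟩
  choose X hX using hX
  have hY (p : D) : ∃ v, v ≠ X ⟨p, hD p.2⟩ ∧ absNorm v.asIdeal = p := by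
    obtain ⟨I, I', hne, hI, hI'⟩ := htwo p p.2
    obtain ⟨v, rfl⟩ := hprime (hD p.2).1 hI
    obtain ⟨w, rfl⟩ := hprime (hD p.2).1 hI'
    by_cases hv : v = X ⟨p, hD p.2⟩
    · exact ⟨w, fun hw => hne (by rw [hv, hw]), hI'⟩
    · exact ⟨v, hv, hI⟩
  choose Y hYX hY using hY
  have hXinj : X.Injective := fun p q h => Subtype.ext (by rw [← hX, ← hX, h])
  have hYinj : Y.Injective := fun p q h => Subtype.ext (by rw [← hY, ← hY, h])
  have hXY (p : degreeOnePrimes K) (q : D) : X p ≠ Y q := fun h => hYX q <| by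
    have hpq : p = ⟨q, hD q.2⟩ := Subtype.ext (by rw [← hX, h, hY])
    rw [← h, hpq]
  have h := tsum_add_tsum_le_tsum (summable_heightOneSpectrum_absNorm_rpow K hs)
    (fun _ => by positivity) (hXinj.sumElim hYinj hXY)
  simp only [hX, hY] at h
  rwa [Set.primeIdealZetaSum_def, tsum_univ fun v : HeightOneSpectrum (𝓞 K) =>
    (absNorm v.asIdeal : ℝ) ^ (-s)]

/-- Almost every degree-one prime of `L` counts twice among the degree-one primes of `K`, whose sum
is at most `log (1 / (s - 1)) + O(1)`. -/
theorem exists_upperDirichletDensityLE_degreeOnePrimes {σ τ : K →+* L} (hστ : σ ≠ τ) :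
    ∃ β : ℝ, 0 < β ∧ UpperDirichletDensityLE (degreeOnePrimes K) (1 - β) := by
  obtain ⟨M, hM, htwo⟩ := exists_ne_absNorm_eq hστ
  set D := {p ∈ degreeOnePrimes L | ¬ p ∣ M}
  have hDK : D ⊆ degreeOnePrimes K := fun p hp => by
    obtain ⟨I, -, -, hI, -⟩ := htwo p hp.1 hp.2
    exact ⟨hp.1.1, I, hI⟩
  have hLD : degreeOnePrimes L ⊆ D ∪ M.divisors := fun p hp => by
    by_cases hpM : p ∣ M
    · exact Or.inr (Finset.mem_coe.2 (Nat.mem_divisors.2 ⟨hpM, hM⟩))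
    · exact Or.inl ⟨hp, hpM⟩
  let n : ℝ := Module.finrank ℚ L
  have hn : 0 < n := Nat.cast_pos.2 Module.finrank_pos
  obtain ⟨C, hC⟩ := (primeIdealZetaSum_univ_sub_log_isBigO K).bound
  obtain ⟨C', hC'⟩ := log_inv_le_finrank_mul_tsum L
  refine ⟨n⁻¹, inv_pos.2 hn, C + (M.divisors : Set ℕ).ncard + n⁻¹ * C', ?_⟩
  filter_upwards [hC, hC', self_mem_nhdsWithin] with s hs hs' hs₁
  rw [norm_one, mul_one, Real.norm_eq_abs] at hs
  have hlower : n⁻¹ * Real.log (s - 1)⁻¹ ≤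
      ∑' p : D, (p : ℝ) ^ (-s) + (M.divisors : Set ℕ).ncard + n⁻¹ * C' := by
    grw [← tsum_rpow_neg_le_add_ncard (Finset.finite_toSet _) hLD hs₁,
      mul_le_mul_of_nonneg_left hs' (inv_pos.2 hn).le, mul_add, inv_mul_cancel_left₀ hn.ne']
  linarith [(abs_le.1 hs).2,
    tsum_add_tsum_le_primeIdealZetaSum hDK (fun p hp => htwo p hp.1 hp.2) hs₁]

end TwoEmbeddings

/-! ### Primes modulo which a polynomial has a root -/

section KummerDedekind

variable {K : Type*} [Field K] [NumberField K]

lemma exists_absNorm_eq_of_eval₂_minpoly_eq_zero {θ : 𝓞 K} {p : ℕ} [Fact p.Prime]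
    (hp : ¬ p ∣ RingOfIntegers.exponent θ) {x : ZMod p}
    (hx : eval₂ (Int.castRingHom (ZMod p)) x (minpoly ℤ θ) = 0) :
    ∃ I : Ideal (𝓞 K), absNorm I = p := by
  obtain ⟨m, rfl⟩ := ZMod.intCast_surjective x
  have hmap : (X - C m : ℤ[X]).map (Int.castRingHom (ZMod p)) = X - C (m : ZMod p) := by simp
  have hfactor : (X - C m : ℤ[X]).map (Int.castRingHom (ZMod p)) ∈
      RingOfIntegers.monicFactorsMod θ p := by
    rw [Multiset.mem_toFinset, Polynomial.mem_normalizedFactors_iff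
      (map_monic_ne_zero (minpoly.monic θ.isIntegral)), hmap]
    refine ⟨irreducible_X_sub_C _, monic_X_sub_C _, ?_⟩
    rwa [dvd_iff_isRoot, IsRoot.def, eval_map]
  refine ⟨Ideal.span {(p : 𝓞 K), aeval θ (X - C m : ℤ[X])}, ?_⟩
  rw [absNorm_apply, Submodule.cardQuot_apply,
    ← Nat.card_congr (RingOfIntegers.ZModXQuotSpanEquivQuotSpanPair hp hfactor).toEquiv, hmap,
    Nat.card_congr (quotientSpanXSubCAlgEquiv (m : ZMod p)).toEquiv, Nat.card_zmod]

lemma exponent_ne_zero_of_adjoin_eq_top {θ : 𝓞 K} (hθ : Algebra.adjoin ℚ {(θ : K)} = ⊤) :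
    RingOfIntegers.exponent θ ≠ 0 := by
  have hderiv : aeval θ (derivative (minpoly ℤ θ)) ≠ 0 := by
    intro h
    have hmin : minpoly ℚ (θ : K) = (minpoly ℤ θ).map (algebraMap ℤ ℚ) :=
      minpoly.isIntegrallyClosed_eq_field_fractions ℚ K θ.isIntegral
    refine (minpoly.irreducible (IsIntegral.of_finite ℚ (θ : K))).separable.aeval_derivative_ne_zero
      (minpoly.aeval ℚ (θ : K)) ?_
    rw [hmin, derivative_map, aeval_map_algebraMap, aeval_algebraMap_apply, h, map_zero]
  have hconductor : conductor ℤ θ ≠ ⊥ := by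
    intro h
    have := conductor_mul_differentIdeal ℤ ℚ K θ hθ
    rw [h, Ideal.bot_mul, eq_comm, Ideal.span_singleton_eq_bot] at this
    exact hderiv this
  rw [RingOfIntegers.exponent, Ne, absNorm_eq_zero_iff]
  exact mt eq_bot_of_comap_eq_bot hconductor

end KummerDedekind

lemma adjoin_singleton_zsmul {K : Type*} [Field K] [CharZero K] {a : ℤ} (ha : a ≠ 0) (α : K) :
    Algebra.adjoin ℚ {a • α} = Algebra.adjoin ℚ {α} := by
  refine le_antisymm (Algebra.adjoin_singleton_le
    (zsmul_mem (Algebra.self_mem_adjoin_singleton ℚ α) a)) (Algebra.adjoin_singleton_le ?_)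
  have h := Subalgebra.smul_mem _ (Algebra.self_mem_adjoin_singleton ℚ (a • α)) (a : ℚ)⁻¹
  rwa [← Int.cast_smul_eq_zsmul ℚ, inv_smul_smul₀ (Int.cast_ne_zero.2 ha),
    Int.cast_smul_eq_zsmul] at h

lemma minpoly_leadingCoeff_smul {K : Type*} [Field K] [CharZero K] {P : ℤ[X]} {α : K}
    (hP : Irreducible (P.map (Int.castRingHom ℚ))) (hdeg : 1 ≤ P.natDegree) (hα : aeval α P = 0) :
    minpoly ℤ (P.leadingCoeff • α) = P.integralNormalization := by
  have hP₀ : P ≠ 0 := by rintro rfl; simp at hdeg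
  have hαℚ : aeval α (P.map (algebraMap ℤ ℚ)) = 0 := by rwa [aeval_map_algebraMap]
  have hint : IsIntegral ℤ (P.leadingCoeff • α) := isIntegral_leadingCoeff_smul P α hα
  have hroot : aeval (P.leadingCoeff • α) P.integralNormalization = 0 := by
    rw [zsmul_eq_mul, aeval_def, ← eq_intCast (algebraMap ℤ K),
      integralNormalization_eval₂_leadingCoeff_mul hdeg, ← aeval_def, hα, mul_zero]
  have hαint : IsIntegral ℚ α :=
    IsAlgebraic.isIntegral ⟨P.map (algebraMap ℤ ℚ), hP.ne_zero, hαℚ⟩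
  have hdegree : (minpoly ℤ (P.leadingCoeff • α)).natDegree = P.natDegree :=
    calc (minpoly ℤ (P.leadingCoeff • α)).natDegree
        = (minpoly ℚ (P.leadingCoeff • α)).natDegree := by
          rw [minpoly.isIntegrallyClosed_eq_field_fractions' ℚ hint,
            (minpoly.monic hint).natDegree_map]
      _ = (minpoly ℚ α).natDegree := by
          rw [← Int.cast_smul_eq_zsmul ℚ, IsIntegrallyClosed.minpoly_smul
            (Int.cast_ne_zero.2 (leadingCoeff_ne_zero.2 hP₀)) hαint, natDegree_scaleRoots]
      _ = (P.map (algebraMap ℤ ℚ)).natDegree := by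
          rw [← minpoly.eq_of_irreducible hP hαℚ, natDegree_mul_C
            (inv_ne_zero (leadingCoeff_ne_zero.2 hP.ne_zero))]
          rfl
      _ = P.natDegree := natDegree_map_eq_of_injective Int.cast_injective P
  refine (eq_of_monic_of_dvd_of_natDegree_le (minpoly.monic hint)
    (monic_integralNormalization hP₀) (minpoly.isIntegrallyClosed_dvd hint hroot) ?_).symm
  rw [natDegree_integralNormalization, hdegree]

/-- The primes `p` for which the homogenization of `P` has a zero in `ℙ¹(𝔽_p)`; the zero is the
point at infinity when `p` divides the leading coefficient. -/
def rootPrimes (P : ℤ[X]) : Set ℕ :=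
  {p | p.Prime ∧ ((p : ℤ) ∣ P.leadingCoeff ∨
    ∃ x : ZMod p, eval₂ (Int.castRingHom (ZMod p)) x P = 0)}

lemma exists_finite_rootPrimes_subset {K : Type*} [Field K] [NumberField K] {P : ℤ[X]} {α : K}
    (hP : Irreducible (P.map (Int.castRingHom ℚ))) (hdeg : 1 ≤ P.natDegree) (hα : aeval α P = 0)
    (htop : Algebra.adjoin ℚ {α} = ⊤) :
    ∃ E : Set ℕ, E.Finite ∧ rootPrimes P ⊆ degreeOnePrimes K ∪ E := by
  have ha : P.leadingCoeff ≠ 0 := leadingCoeff_ne_zero.2 (by rintro rfl; simp at hdeg)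
  let θ : 𝓞 K := ⟨P.leadingCoeff • α, isIntegral_leadingCoeff_smul P α hα⟩
  have hmin : minpoly ℤ θ = P.integralNormalization :=
    (minpoly.algebraMap_eq RingOfIntegers.coe_injective θ).symm.trans
      (minpoly_leadingCoeff_smul hP hdeg hα)
  have hexp : RingOfIntegers.exponent θ ≠ 0 :=
    exponent_ne_zero_of_adjoin_eq_top ((adjoin_singleton_zsmul ha α).trans htop)
  refine ⟨(RingOfIntegers.exponent θ * P.leadingCoeff.natAbs).divisors, Finset.finite_toSet _, ?_⟩
  rintro p ⟨hp, hroot⟩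
  by_cases hdvd : p ∣ RingOfIntegers.exponent θ * P.leadingCoeff.natAbs
  · exact Or.inr (Finset.mem_coe.2 (Nat.mem_divisors.2
      ⟨hdvd, mul_ne_zero hexp (Int.natAbs_ne_zero.2 ha)⟩))
  have : Fact p.Prime := ⟨hp⟩
  obtain ⟨x, hx⟩ := hroot.resolve_left fun h => hdvd ((Int.natCast_dvd.1 h).mul_left _)
  refine Or.inl ⟨hp, exists_absNorm_eq_of_eval₂_minpoly_eq_zero (fun h => hdvd (h.mul_right _))
    (x := Int.castRingHom (ZMod p) P.leadingCoeff * x) ?_⟩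
  rw [hmin, integralNormalization_eval₂_leadingCoeff_mul hdeg, hx, mul_zero]

lemma exists_ringHom_adjoinRoot_ne {F : Type*} [Field F] {f : F[X]} (hf : f.Separable)
    (hdeg : 2 ≤ f.natDegree) : ∃ σ τ : AdjoinRoot f →+* f.SplittingField, σ ≠ τ := by
  have hcard := card_rootSet_eq_natDegree hf (SplittingField.splits f)
  obtain ⟨x, y, hxy⟩ := Fintype.one_lt_card_iff.1 (hcard.symm ▸ hdeg)
  have hroot (z : f.rootSet f.SplittingField) : eval₂ (algebraMap F f.SplittingField) z.1 f = 0 :=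
    aeval_eq_zero_of_mem_rootSet z.2
  refine ⟨AdjoinRoot.lift _ _ (hroot x), AdjoinRoot.lift _ _ (hroot y), fun h => hxy ?_⟩
  have heq := RingHom.congr_fun h (AdjoinRoot.root f)
  rw [AdjoinRoot.lift_root, AdjoinRoot.lift_root] at heq
  exact Subtype.ext heq

theorem exists_upperDirichletDensityLE_rootPrimes {P : ℤ[X]}
    (hP : Irreducible (P.map (Int.castRingHom ℚ))) (hdeg : 2 ≤ P.natDegree) :
    ∃ β : ℝ, 0 < β ∧ UpperDirichletDensityLE (rootPrimes P) (1 - β) := by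
  set f := P.map (Int.castRingHom ℚ)
  have : Fact (Irreducible f) := ⟨hP⟩
  have hfdeg : f.natDegree = P.natDegree := natDegree_map_eq_of_injective Int.cast_injective P
  have : FiniteDimensional ℚ (AdjoinRoot f) := (AdjoinRoot.powerBasis hP.ne_zero).finite
  have : NumberField (AdjoinRoot f) := ⟨⟩
  have : CharZero f.SplittingField :=
    charZero_of_injective_algebraMap (algebraMap ℚ f.SplittingField).injective
  have : NumberField f.SplittingField := ⟨⟩
  obtain ⟨σ, τ, hστ⟩ := exists_ringHom_adjoinRoot_ne hP.separable (hdeg.trans_eq hfdeg.symm)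
  have hroot : aeval (AdjoinRoot.root f) P = 0 := by
    rw [← aeval_map_algebraMap ℚ]
    exact (AdjoinRoot.aeval_eq f).trans AdjoinRoot.mk_self
  obtain ⟨E, hE, hsub⟩ := exists_finite_rootPrimes_subset hP (by omega) hroot
    AdjoinRoot.adjoinRoot_eq_top
  obtain ⟨β, hβ, hdens⟩ := exists_upperDirichletDensityLE_degreeOnePrimes hστ
  exact ⟨β, hβ, hdens.of_subset_union_finite hE hsub⟩

/-! ### Squarefree numbers with restricted prime factors -/

/-- The squarefree positive integers up to `x` all of whose prime factors lie in `A`. -/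
noncomputable def squarefreeFactored (A : Set ℕ) (x : ℕ) : Finset ℕ := by
  classical
  exact {n ∈ Finset.Icc 1 x | Squarefree n ∧ ∀ p, p.Prime → p ∣ n → p ∈ A}

lemma mem_squarefreeFactored {A : Set ℕ} {x n : ℕ} : n ∈ squarefreeFactored A x ↔
    (1 ≤ n ∧ n ≤ x) ∧ Squarefree n ∧ ∀ p, p.Prime → p ∣ n → p ∈ A := by
  classical
  simp [squarefreeFactored]

lemma sum_rpow_neg_le_exp_sum {N : Finset ℕ} (hN : ∀ n ∈ N, Squarefree n) (s : ℝ) :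
    ∑ n ∈ N, (n : ℝ) ^ (-s) ≤ Real.exp (∑ p ∈ N.biUnion Nat.primeFactors, (p : ℝ) ^ (-s)) := by
  set B := N.biUnion Nat.primeFactors
  have hnonneg (p : ℕ) : 0 ≤ (p : ℝ) ^ (-s) := Real.rpow_nonneg p.cast_nonneg _
  have hinj : Set.InjOn Nat.primeFactors (N : Set ℕ) := fun m hm n hn hmn => by
    rw [← Nat.prod_primeFactors_of_squarefree (hN m hm),
      ← Nat.prod_primeFactors_of_squarefree (hN n hn), hmn]
  have hterm : ∀ n ∈ N, (n : ℝ) ^ (-s) = ∏ p ∈ n.primeFactors, (p : ℝ) ^ (-s) := fun n hn => by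
    rw [Real.finsetProd_rpow _ _ fun p _ => p.cast_nonneg, ← Nat.cast_prod,
      Nat.prod_primeFactors_of_squarefree (hN n hn)]
  calc ∑ n ∈ N, (n : ℝ) ^ (-s)
      = ∑ t ∈ N.image Nat.primeFactors, ∏ p ∈ t, (p : ℝ) ^ (-s) := by
        rw [Finset.sum_image hinj]
        exact Finset.sum_congr rfl hterm
    _ ≤ ∑ t ∈ B.powerset, ∏ p ∈ t, (p : ℝ) ^ (-s) := by
        refine Finset.sum_le_sum_of_subset_of_nonneg (Finset.image_subset_iff.2 fun n hn => ?_)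
          fun t _ _ => Finset.prod_nonneg fun p _ => hnonneg p
        exact Finset.mem_powerset.2 (Finset.subset_biUnion_of_mem _ hn)
    _ = ∏ p ∈ B, (1 + (p : ℝ) ^ (-s)) := (Finset.prod_one_add B).symm
    _ ≤ Real.exp (∑ p ∈ B, (p : ℝ) ^ (-s)) := Real.prod_one_add_le_exp_sum B hnonneg

lemma sum_squarefreeFactored_rpow_neg_le (A : Set ℕ) (x : ℕ) {s : ℝ} (hs : 1 < s) :
    ∑ n ∈ squarefreeFactored A x, (n : ℝ) ^ (-s) ≤ Real.exp (∑' p : A, (p : ℝ) ^ (-s)) := by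
  classical
  set B := (squarefreeFactored A x).biUnion Nat.primeFactors
  have hBA : ∀ p ∈ B, p ∈ A := fun p hp => by
    obtain ⟨n, hn, hpn⟩ := Finset.mem_biUnion.1 hp
    exact (mem_squarefreeFactored.1 hn).2.2 p (Nat.prime_of_mem_primeFactors hpn)
      (Nat.dvd_of_mem_primeFactors hpn)
  have hsum : Summable fun p : A => (p : ℝ) ^ (-s) :=
    (Real.summable_nat_rpow.2 (neg_lt_neg hs)).subtype A
  refine (sum_rpow_neg_le_exp_sum (fun n hn => (mem_squarefreeFactored.1 hn).2.1) s).trans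
    (Real.exp_le_exp.2 ?_)
  rw [← Finset.sum_subtype_of_mem (fun p : ℕ => (p : ℝ) ^ (-s)) hBA]
  exact hsum.sum_le_tsum _ fun p _ => Real.rpow_nonneg p.1.cast_nonneg _

/-- Substitute `n = p * m`. -/
lemma sum_sum_primeFactors_le {f : ℕ → ℝ} (hf : ∀ p, 0 ≤ f p) (A : Set ℕ) (x : ℕ) :
    ∑ n ∈ squarefreeFactored A x, ∑ p ∈ n.primeFactors, f p ≤
      ∑ m ∈ squarefreeFactored A x, ∑ p ∈ Nat.primesLE (x / m), f p := by
  classical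
  set N := squarefreeFactored A x
  have hinj : Set.InjOn (fun a : (_ : ℕ) × ℕ => (⟨a.1 / a.2, a.2⟩ : (_ : ℕ) × ℕ))
      (N.sigma Nat.primeFactors) := by
    rintro ⟨n, p⟩ hn ⟨m, q⟩ hm heq
    obtain ⟨hdiv, rfl⟩ : n / p = m / q ∧ p = q := by simpa using heq
    have hpn : p ∣ n := Nat.dvd_of_mem_primeFactors (Finset.mem_sigma.1 hn).2
    have hpm : p ∣ m := Nat.dvd_of_mem_primeFactors (Finset.mem_sigma.1 hm).2
    rw [(Nat.div_left_inj hpn hpm).1 hdiv]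
  have hmaps : (N.sigma Nat.primeFactors).image (fun a => ⟨a.1 / a.2, a.2⟩) ⊆
      N.sigma fun m => Nat.primesLE (x / m) := by
    refine Finset.image_subset_iff.2 ?_
    rintro ⟨n, p⟩ hnp
    obtain ⟨hn, hp⟩ : n ∈ N ∧ p ∈ n.primeFactors := Finset.mem_sigma.1 hnp
    obtain ⟨⟨hn₁, hnx⟩, hsq, hA⟩ := mem_squarefreeFactored.1 hn
    have hpp := Nat.prime_of_mem_primeFactors hp
    obtain ⟨m, rfl⟩ := Nat.dvd_of_mem_primeFactors hp
    have hm : 0 < m := Nat.pos_of_mul_pos_left hn₁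
    simp only [Nat.mul_div_cancel_left m hpp.pos, Finset.mem_sigma, Nat.mem_primesLE]
    exact ⟨mem_squarefreeFactored.2 ⟨⟨hm, (Nat.le_mul_of_pos_left m hpp.pos).trans hnx⟩,
      hsq.squarefree_of_dvd (dvd_mul_left m p), fun q hq hqm => hA q hq (hqm.mul_left p)⟩,
      (Nat.le_div_iff_mul_le hm).2 hnx, hpp⟩
  rw [Finset.sum_sigma', Finset.sum_sigma',
    ← Finset.sum_image (f := fun a : (_ : ℕ) × ℕ => f a.2) hinj]
  exact Finset.sum_le_sum_of_subset_of_nonneg hmaps fun a _ _ => hf a.2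

lemma sum_squarefreeFactored_log_le (A : Set ℕ) (x : ℕ) :
    ∑ n ∈ squarefreeFactored A x, Real.log n ≤
      Real.log 4 * x * ∑ n ∈ squarefreeFactored A x, (n : ℝ)⁻¹ := by
  have hlog : ∀ n ∈ squarefreeFactored A x, Real.log n = ∑ p ∈ n.primeFactors, Real.log p := by
    intro n hn
    conv_lhs => rw [← Nat.prod_primeFactors_of_squarefree (mem_squarefreeFactored.1 hn).2.1]
    rw [Nat.cast_prod, Real.log_prod fun p hp =>
      Nat.cast_ne_zero.2 (Nat.prime_of_mem_primeFactors hp).ne_zero]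
  rw [Finset.sum_congr rfl hlog, Finset.mul_sum]
  refine (sum_sum_primeFactors_le (fun p => Real.log_natCast_nonneg p) A x).trans
    (Finset.sum_le_sum fun m _ => ?_)
  calc ∑ p ∈ Nat.primesLE (x / m), Real.log p
      = Chebyshev.theta (x / m : ℕ) := (Chebyshev.theta_eq_sum_primesLE_log _).symm
    _ ≤ Real.log 4 * (x / m : ℕ) := Chebyshev.theta_le_log4_mul_x (Nat.cast_nonneg _)
    _ ≤ Real.log 4 * (x / m) :=
        mul_le_mul_of_nonneg_left Nat.cast_div_le (Real.log_nonneg (by norm_num))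
    _ = Real.log 4 * x * (m : ℝ)⁻¹ := by rw [div_eq_mul_inv, mul_assoc]

/-- The logarithm is split as `log x = log n + log (x / n)`. -/
lemma card_squarefreeFactored_mul_log_le (A : Set ℕ) (x : ℕ) :
    ((squarefreeFactored A x).card : ℝ) * Real.log x ≤
      (Real.log 4 + 1) * x * ∑ n ∈ squarefreeFactored A x, (n : ℝ)⁻¹ := by
  have hterm : ∀ n ∈ squarefreeFactored A x, Real.log x ≤ Real.log n + x * (n : ℝ)⁻¹ := by
    intro n hn
    obtain ⟨hn₁, hnx⟩ := (mem_squarefreeFactored.1 hn).1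
    have hn₀ : (0 : ℝ) < n := Nat.cast_pos.2 hn₁
    have hx₀ : (0 : ℝ) < x := Nat.cast_pos.2 (hn₁.trans hnx)
    have := Real.log_le_self (div_pos hx₀ hn₀).le
    rw [Real.log_div hx₀.ne' hn₀.ne', div_eq_mul_inv] at this
    linarith
  calc ((squarefreeFactored A x).card : ℝ) * Real.log x
      = ∑ _ ∈ squarefreeFactored A x, Real.log x := by rw [Finset.sum_const, nsmul_eq_mul]
    _ ≤ ∑ n ∈ squarefreeFactored A x, (Real.log n + x * (n : ℝ)⁻¹) := Finset.sum_le_sum hterm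
    _ = ∑ n ∈ squarefreeFactored A x, Real.log n +
          x * ∑ n ∈ squarefreeFactored A x, (n : ℝ)⁻¹ := by
        rw [Finset.sum_add_distrib, Finset.mul_sum]
    _ ≤ (Real.log 4 + 1) * x * ∑ n ∈ squarefreeFactored A x, (n : ℝ)⁻¹ := by
        linarith [sum_squarefreeFactored_log_le A x]

lemma inv_le_exp_one_mul_rpow {n x : ℝ} (hn : 0 < n) (hnx : n ≤ x) (hx : 1 < x) :
    n⁻¹ ≤ Real.exp 1 * n ^ (-(1 + (Real.log x)⁻¹)) := by
  have hle : Real.log n * (Real.log x)⁻¹ ≤ 1 := by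
    rw [← div_eq_mul_inv, div_le_one (Real.log_pos hx)]
    exact Real.log_le_log hn hnx
  rw [← Real.rpow_neg_one, Real.rpow_def_of_pos hn, Real.rpow_def_of_pos hn, ← Real.exp_add,
    Real.exp_le_exp]
  linarith

lemma UpperDirichletDensityLE.sum_squarefreeFactored_inv_le {A : Set ℕ} {δ : ℝ}
    (hA : UpperDirichletDensityLE A δ) :
    ∃ C : ℝ, ∀ᶠ x : ℕ in atTop,
      ∑ n ∈ squarefreeFactored A x, (n : ℝ)⁻¹ ≤ C * Real.log x ^ δ := by
  obtain ⟨C, hC⟩ := hA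
  have hlog : Tendsto (fun x : ℕ => Real.log x) atTop atTop :=
    Real.tendsto_log_atTop.comp tendsto_natCast_atTop_atTop
  have htend : Tendsto (fun x : ℕ => 1 + (Real.log x)⁻¹) atTop (𝓝[>] 1) := by
    refine tendsto_nhdsWithin_iff.2
      ⟨by simpa using (tendsto_inv_atTop_zero.comp hlog).const_add 1, ?_⟩
    filter_upwards [hlog.eventually_gt_atTop 0] with x hx
    simpa using hx
  refine ⟨Real.exp 1 * Real.exp C, ?_⟩
  filter_upwards [htend.eventually hC, hlog.eventually_gt_atTop 0, eventually_gt_atTop 1]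
    with x hx hlogx hx₁
  rw [add_sub_cancel_left, inv_inv] at hx
  set s := 1 + (Real.log x)⁻¹
  calc ∑ n ∈ squarefreeFactored A x, (n : ℝ)⁻¹
      ≤ ∑ n ∈ squarefreeFactored A x, Real.exp 1 * (n : ℝ) ^ (-s) := by
        refine Finset.sum_le_sum fun n hn => ?_
        obtain ⟨hn₁, hnx⟩ := (mem_squarefreeFactored.1 hn).1
        exact inv_le_exp_one_mul_rpow (Nat.cast_pos.2 hn₁) (Nat.cast_le.2 hnx)
          (Nat.one_lt_cast.2 hx₁)
    _ = Real.exp 1 * ∑ n ∈ squarefreeFactored A x, (n : ℝ) ^ (-s) := (Finset.mul_sum _ _ _).symm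
    _ ≤ Real.exp 1 * Real.exp (δ * Real.log (Real.log x) + C) := by
        gcongr
        have hs : 1 < s := lt_add_of_pos_right 1 (inv_pos.2 hlogx)
        exact (sum_squarefreeFactored_rpow_neg_le A x hs).trans (Real.exp_le_exp.2 hx)
    _ = Real.exp 1 * Real.exp C * Real.log x ^ δ := by
        rw [Real.rpow_def_of_pos hlogx, Real.exp_add, mul_comm δ]
        ring

theorem UpperDirichletDensityLE.card_squarefreeFactored_isBigO {A : Set ℕ} {δ : ℝ}
    (hA : UpperDirichletDensityLE A δ) :
    (fun x : ℕ => ((squarefreeFactored A x).card : ℝ)) =O[atTop]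
      fun x : ℕ => (x : ℝ) * Real.log x ^ (δ - 1) := by
  obtain ⟨C, hC⟩ := hA.sum_squarefreeFactored_inv_le
  refine IsBigO.of_bound ((Real.log 4 + 1) * C) ?_
  filter_upwards [hC, eventually_gt_atTop 1] with x hx hx₁
  have hlog : 0 < Real.log x := Real.log_pos (Nat.one_lt_cast.2 hx₁)
  have : 0 ≤ Real.log 4 := Real.log_nonneg (by norm_num)
  rw [Real.norm_of_nonneg (Nat.cast_nonneg _), Real.norm_of_nonneg (by positivity)]
  refine le_of_mul_le_mul_right ?_ hlog
  calc ((squarefreeFactored A x).card : ℝ) * Real.log x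
      ≤ (Real.log 4 + 1) * x * ∑ n ∈ squarefreeFactored A x, (n : ℝ)⁻¹ :=
        card_squarefreeFactored_mul_log_le A x
    _ ≤ (Real.log 4 + 1) * x * (C * Real.log x ^ δ) := by gcongr
    _ = (Real.log 4 + 1) * C * (x * Real.log x ^ (δ - 1)) * Real.log x := by
        rw [Real.rpow_sub_one hlog.ne']
        field_simp

/-! ### Specializations of quadratic extensions -/

lemma dvd_of_isSquare_mul_of_not_sq_dvd {M : Type*} [CommMonoidWithZero M] [IsCancelMulZero M]
    {p a b : M} (hp : Prime p) (hpa : p ∣ a) (hpa₂ : ¬ p ^ 2 ∣ a) (hab : IsSquare (a * b)) :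
    p ∣ b := by
  obtain ⟨a, rfl⟩ := hpa
  obtain ⟨s, hs⟩ := hab
  obtain ⟨s, rfl⟩ : p ∣ s := by
    refine (hp.dvd_or_dvd ?_).elim id id
    exact hs ▸ (dvd_mul_right p a).mul_right b
  have hdvd : p ∣ a * b := by
    refine ⟨s * s, mul_left_cancel₀ hp.ne_zero ?_⟩
    rw [← mul_assoc, hs]
    ac_rfl
  refine (hp.dvd_or_dvd hdvd).resolve_left fun h => hpa₂ ?_
  rw [sq]
  exact mul_dvd_mul_left p h

lemma dvd_eval_scaleRoots_sub {R : Type*} [CommRing R] (P : R[X]) (u v : R) :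
    v ∣ (P.scaleRoots v).eval u - P.leadingCoeff * u ^ P.natDegree := by
  rw [eval_eq_sum_range, natDegree_scaleRoots, Finset.sum_range_succ, coeff_scaleRoots_natDegree,
    add_sub_cancel_right]
  refine Finset.dvd_sum fun i hi => ?_
  have hi : P.natDegree - i ≠ 0 := (Nat.sub_pos_of_lt (Finset.mem_range.1 hi)).ne'
  rw [coeff_scaleRoots]
  exact ((dvd_pow_self v hi).mul_left _).mul_right _

lemma mem_rootPrimes_of_dvd_eval_scaleRoots {P : ℤ[X]} {u v : ℤ} (huv : IsCoprime u v) {p : ℕ}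
    (hp : p.Prime) (h : (p : ℤ) ∣ (P.scaleRoots v).eval u) : p ∈ rootPrimes P := by
  have : Fact p.Prime := ⟨hp⟩
  have hp' : Prime (p : ℤ) := Nat.prime_iff_prime_int.1 hp
  refine ⟨hp, ?_⟩
  by_cases hpv : (p : ℤ) ∣ v
  · have hlead : (p : ℤ) ∣ P.leadingCoeff * u ^ P.natDegree :=
      (dvd_sub_right h).1 (hpv.trans (dvd_eval_scaleRoots_sub P u v))
    exact Or.inl ((hp'.dvd_or_dvd hlead).resolve_right fun hu =>
      hp'.not_isUnit (huv.isUnit_of_dvd' (hp'.dvd_of_dvd_pow hu) hpv))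
  · set f := Int.castRingHom (ZMod p)
    have hfv : f v ≠ 0 := fun h => hpv ((ZMod.intCast_zmod_eq_zero_iff_dvd v p).1 h)
    have heval : eval₂ f (f v * (f u / f v)) (P.scaleRoots v) = 0 := by
      rw [mul_div_cancel₀ _ hfv, eval₂_hom]
      exact (ZMod.intCast_zmod_eq_zero_iff_dvd _ p).2 h
    rw [scaleRoots_eval₂_mul] at heval
    exact Or.inr ⟨_, (mul_eq_zero.1 heval).resolve_left (pow_ne_zero _ hfv)⟩

/-- `ℚ(√d)` is a specialization of `ℚ(T)(√P)/ℚ(T)` at a point of `ℙ¹(ℚ)` which is not a branch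
point. The second alternative is the point at infinity. -/
def IsSpecialization (P : ℤ[X]) (d : ℤ) : Prop :=
  (∃ t₀ : ℚ, aeval t₀ P ≠ 0 ∧ ∃ s : ℚ, s ≠ 0 ∧ (d : ℚ) * aeval t₀ P = s ^ 2) ∨
    (Even P.natDegree ∧ ∃ s : ℚ, s ≠ 0 ∧ (d : ℚ) * (P.leadingCoeff : ℚ) = s ^ 2)

lemma den_pow_natDegree_mul_aeval (P : ℤ[X]) (t : ℚ) :
    (t.den : ℚ) ^ P.natDegree * aeval t P = ((P.scaleRoots t.den).eval t.num : ℤ) := by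
  have h := scaleRoots_eval₂_mul (p := P) (Int.castRingHom ℚ) t t.den
  rw [eq_intCast, Int.cast_natCast, Rat.den_mul_eq_num, ← eq_intCast (Int.castRingHom ℚ) t.num,
    eval₂_hom] at h
  exact h.symm

lemma IsSpecialization.mem_rootPrimes {P : ℤ[X]} (hP : Even P.natDegree) {d : ℤ}
    (hd : IsSpecialization P d) {p : ℕ} (hp : p.Prime) (hpd : (p : ℤ) ∣ d)
    (hpd₂ : ¬ (p : ℤ) ^ 2 ∣ d) : p ∈ rootPrimes P := by
  have hdvd {F : ℤ} (h : IsSquare ((d : ℚ) * F)) : (p : ℤ) ∣ F :=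
    dvd_of_isSquare_mul_of_not_sq_dvd (Nat.prime_iff_prime_int.1 hp) hpd hpd₂
      (Rat.isSquare_intCast_iff.1 (by rwa [Int.cast_mul]))
  rcases hd with ⟨t, -, s, -, hs⟩ | ⟨-, s, -, hs⟩
  · refine mem_rootPrimes_of_dvd_eval_scaleRoots (Rat.isCoprime_num_den t) hp (hdvd ?_)
    rw [← den_pow_natDegree_mul_aeval, mul_left_comm, hs]
    exact (hP.isSquare_pow _).mul ⟨s, sq s⟩
  · exact ⟨hp, Or.inl (hdvd ⟨s, hs.trans (sq s)⟩)⟩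

lemma SqfInt.squarefree_natAbs {d : ℤ} (hd : SqfInt d) : Squarefree d.natAbs := by
  rw [Nat.squarefree_iff_prime_squarefree]
  intro p hp hdvd
  refine hd.2.2 p hp ?_
  rw [← Int.dvd_natAbs, sq]
  exact_mod_cast hdvd

lemma ncard_isSpecialization_le {P : ℤ[X]} (hP : Even P.natDegree) (x : ℕ) :
    {d : ℤ | SqfInt d ∧ |d| ≤ (x : ℤ) ∧ IsSpecialization P d}.ncard ≤
      2 * (squarefreeFactored (rootPrimes P) x).card := by
  classical
  set N := squarefreeFactored (rootPrimes P) x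
  have hsub : {d : ℤ | SqfInt d ∧ |d| ≤ (x : ℤ) ∧ IsSpecialization P d} ⊆
      (N.image (fun n : ℕ => (n : ℤ)) ∪ N.image (fun n : ℕ => -(n : ℤ)) : Finset ℤ) := by
    rintro d ⟨hsq, hdx, hspec⟩
    have hdx : d.natAbs ≤ x := Nat.cast_le.1 (d.natCast_natAbs.trans_le hdx)
    have hmem : d.natAbs ∈ N := mem_squarefreeFactored.2
      ⟨⟨Int.natAbs_pos.2 hsq.1, hdx⟩, hsq.squarefree_natAbs, fun p hp hpd =>
        hspec.mem_rootPrimes hP hp (Int.natCast_dvd.2 hpd) (hsq.2.2 p hp)⟩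
    rw [Finset.mem_coe, Finset.mem_union, Finset.mem_image, Finset.mem_image]
    exact (Int.natAbs_eq d).imp (fun h => ⟨_, hmem, h.symm⟩) fun h => ⟨_, hmem, h.symm⟩
  calc {d : ℤ | SqfInt d ∧ |d| ≤ (x : ℤ) ∧ IsSpecialization P d}.ncard
      ≤ (N.image (fun n : ℕ => (n : ℤ)) ∪ N.image (fun n : ℕ => -(n : ℤ))).card :=
        (Set.ncard_le_ncard hsub (Finset.finite_toSet _)).trans_eq (Set.ncard_coe_finset _)
    _ ≤ N.card + N.card :=
        (Finset.card_union_le _ _).trans (add_le_add Finset.card_image_le Finset.card_image_le)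
    _ = 2 * N.card := (two_mul _).symm

theorem exists_ncard_isSpecialization_isBigO {P : ℤ[X]}
    (hP : Irreducible (P.map (Int.castRingHom ℚ))) (hdeg : 0 < P.natDegree)
    (heven : Even P.natDegree) :
    ∃ α : ℝ, 0 < α ∧ α < 1 ∧
      (fun x : ℕ => ({d : ℤ | SqfInt d ∧ |d| ≤ (x : ℤ) ∧ IsSpecialization P d}.ncard : ℝ))
        =O[atTop] fun x : ℕ => (x : ℝ) * Real.log x ^ (-α) := by
  obtain ⟨β, hβ, hdens⟩ := exists_upperDirichletDensityLE_rootPrimes hP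
    (Nat.le_of_dvd hdeg heven.two_dvd)
  refine ⟨min β (1 / 2), by positivity, (min_le_right _ _).trans_lt (by norm_num), ?_⟩
  refine (IsBigO.of_bound 2 (Eventually.of_forall fun x => ?_)).trans
    (hdens.card_squarefreeFactored_isBigO.trans (IsBigO.of_bound 1 ?_))
  · rw [Real.norm_natCast, Real.norm_natCast]
    exact_mod_cast ncard_isSpecialization_le heven x
  · filter_upwards [(Real.tendsto_log_atTop.comp tendsto_natCast_atTop_atTop).eventually_ge_atTop 1]
      with x hx
    have hx : 1 ≤ Real.log x := hx
    rw [one_mul, Real.norm_of_nonneg (by positivity), Real.norm_of_nonneg (by positivity)]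
    gcongr
    linarith [min_le_left β (1 / 2)]

/-! ### Polynomials of bounded height -/

open scoped Pointwise

lemma supNorm_C_mul {A : Type*} [NormedRing A] [NormMulClass A] (a : A) (P : A[X]) :
    (C a * P).supNorm = ‖a‖ * P.supNorm := by
  simp only [supNorm_eq_iSup, coeff_C_mul, norm_mul, Real.mul_iSup_of_nonneg (norm_nonneg a)]

lemma supNorm_map_intCast (P : ℤ[X]) : (P.map (Int.castRingHom ℂ)).supNorm = P.supNorm := by
  simp only [supNorm_eq_iSup, coeff_map, eq_intCast, Complex.norm_intCast, Int.norm_eq_abs]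

lemma one_le_supNorm {P : ℤ[X]} (hP : P ≠ 0) : 1 ≤ P.supNorm := by
  refine le_trans ?_ (P.le_supNorm P.natDegree)
  rw [Int.norm_eq_abs]
  exact_mod_cast Int.one_le_abs (leadingCoeff_ne_zero.2 hP)

lemma supNorm_le_iff {A : Type*} [SeminormedRing A] {P : A[X]} {B : ℝ} :
    P.supNorm ≤ B ↔ ∀ i, ‖P.coeff i‖ ≤ B :=
  (isLUB_le_iff P.isGreatest_supNorm.isLUB).trans Set.forall_mem_range

lemma heightLE_iff_supNorm_le {P : ℤ[X]} {H : ℕ} : HeightLE P H ↔ P.supNorm ≤ H := by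
  simp only [supNorm_le_iff, Int.norm_eq_abs, HeightLE]
  exact forall_congr' fun i => by exact_mod_cast Iff.rfl

lemma supNorm_le_two_pow_mul_mahlerMeasure (P : ℂ[X]) :
    P.supNorm ≤ 2 ^ P.natDegree * P.mahlerMeasure := by
  refine (supNorm_le_choose_natDegree_div_two_mul_mahlerMeasure P).trans ?_
  gcongr
  · exact mahlerMeasure_nonneg P
  · exact_mod_cast Nat.choose_le_two_pow _ _

/-- The constant in Gelfond's inequality for products of degree `n`. -/
noncomputable def gelfondConst (n : ℕ) : ℝ := 2 ^ n * √(n + 1)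

lemma one_le_gelfondConst (n : ℕ) : 1 ≤ gelfondConst n :=
  one_le_mul_of_one_le_of_one_le (one_le_pow₀ one_le_two)
    (Real.one_le_sqrt.2 (le_add_of_nonneg_left n.cast_nonneg))

lemma supNorm_mul_supNorm_le {Q R : ℂ[X]} (hQ : Q ≠ 0) (hR : R ≠ 0) :
    Q.supNorm * R.supNorm ≤ gelfondConst (Q * R).natDegree * (Q * R).supNorm :=
  calc Q.supNorm * R.supNorm
      ≤ (2 ^ Q.natDegree * Q.mahlerMeasure) * (2 ^ R.natDegree * R.mahlerMeasure) :=
        mul_le_mul (supNorm_le_two_pow_mul_mahlerMeasure Q)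
          (supNorm_le_two_pow_mul_mahlerMeasure R) R.supNorm_nonneg
          (mul_nonneg (by positivity) (mahlerMeasure_nonneg Q))
    _ = 2 ^ (Q * R).natDegree * (Q * R).mahlerMeasure := by
        rw [natDegree_mul hQ hR, mahlerMeasure_mul]
        ring
    _ ≤ 2 ^ (Q * R).natDegree * (√((Q * R).natDegree + 1) * (Q * R).supNorm) := by
        gcongr
        exact mahlerMeasure_le_sqrt_natDegree_add_one_mul_supNorm _
    _ = gelfondConst (Q * R).natDegree * (Q * R).supNorm := by rw [gelfondConst, mul_assoc]

lemma supNorm_mul_supNorm_le_int {Q R : ℤ[X]} (hQ : Q ≠ 0) (hR : R ≠ 0) :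
    Q.supNorm * R.supNorm ≤ gelfondConst (Q * R).natDegree * (Q * R).supNorm := by
  have hinj : Function.Injective (Int.castRingHom ℂ) := RingHom.injective_int _
  have h := supNorm_mul_supNorm_le ((Polynomial.map_ne_zero_iff hinj).2 hQ)
    ((Polynomial.map_ne_zero_iff hinj).2 hR)
  rwa [← Polynomial.map_mul, natDegree_map_eq_of_injective hinj, supNorm_map_intCast,
    supNorm_map_intCast, supNorm_map_intCast] at h

/-- The integer polynomials of degree at most `n` and height at most `B`. A real bound `B` spares
the rounding in quotients such as `H / q ^ 2`. -/
def heightBox (n : ℕ) (B : ℝ) : Set ℤ[X] :=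
  {P | P.natDegree ≤ n ∧ P.supNorm ≤ B}

lemma heightBox_eq_boxPoly {n : ℕ} {B : ℝ} (hB : 0 ≤ B) :
    heightBox n B = boxPoly n (fun _ => -B) fun _ => B := by
  ext P
  refine and_congr_right fun hP => ?_
  simp only [supNorm_le_iff, Int.norm_eq_abs, abs_le]
  refine ⟨fun h i => h i, fun h i => ?_⟩
  by_cases hi : i < n + 1
  · exact h ⟨i, hi⟩
  · rw [coeff_eq_zero_of_natDegree_lt (by omega), Int.cast_zero]
    exact ⟨neg_nonpos.2 hB, hB⟩

lemma ncard_heightBox (n : ℕ) {B : ℝ} (hB : 0 ≤ B) :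
    (heightBox n B).ncard = (2 * ⌊B⌋₊ + 1) ^ (n + 1) := by
  rw [heightBox_eq_boxPoly hB, ncard_boxPoly, Finset.prod_const, Finset.card_univ,
    Fintype.card_fin, Int.ceil_neg, ← Int.natCast_floor_eq_floor hB]
  congr 1
  omega

lemma finite_heightBox (n : ℕ) {B : ℝ} (hB : 0 ≤ B) : (heightBox n B).Finite :=
  Set.finite_of_ncard_ne_zero (by rw [ncard_heightBox n hB]; positivity)

lemma ncard_heightBox_le (n : ℕ) {B : ℝ} (hB : 1 ≤ B) :
    ((heightBox n B).ncard : ℝ) ≤ (3 * B) ^ (n + 1) := by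
  rw [ncard_heightBox n (zero_le_one.trans hB)]
  push_cast
  gcongr
  linarith [Nat.floor_le (zero_le_one.trans hB)]

/-! ### Reducible polynomials of bounded height -/

lemma exists_eq_mul_of_not_irreducible_map {R K : Type*} [CommRing R] [IsDomain R]
    [NormalizedGCDMonoid R] [Field K] [Algebra R K] [IsFractionRing R K] {P : R[X]}
    (hdeg : P.natDegree ≠ 0) (hP : ¬ Irreducible (P.map (algebraMap R K))) :
    ∃ Q S : R[X], P = Q * S ∧ Q.natDegree ≠ 0 ∧ S.natDegree ≠ 0 := by
  have hcont : P.content ≠ 0 :=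
    content_eq_zero_iff.not.2 (ne_zero_of_natDegree_gt (Nat.pos_of_ne_zero hdeg))
  have hprim := P.isPrimitive_primPart
  have hred : ¬ Irreducible P.primPart := fun hirr => hP <| by
    rw [P.eq_C_content_mul_primPart, Polynomial.map_mul, map_C]
    refine (irreducible_isUnit_mul (isUnit_C.2 (IsUnit.mk0 _ ?_))).2
      (hprim.irreducible_iff_irreducible_map_fraction_map.1 hirr)
    exact (FaithfulSMul.algebraMap_eq_zero_iff R K).not.2 hcont
  have hnonunit : ¬ IsUnit P.primPart := fun hu =>
    hdeg (P.natDegree_primPart ▸ natDegree_eq_zero_of_isUnit hu)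
  have hfactor {Q : R[X]} (hQ : Q ∣ P.primPart) (hQu : ¬ IsUnit Q) : Q.natDegree ≠ 0 := by
    intro h
    obtain ⟨a, rfl⟩ := natDegree_eq_zero.1 h
    exact hQu (isUnit_C.2 (isPrimitive_iff_isUnit_of_C_dvd.1 hprim a hQ))
  simp only [irreducible_iff, not_and, not_forall, not_or] at hred
  obtain ⟨Q, S, hQS, hQ, hS⟩ := hred hnonunit
  refine ⟨C P.content * Q, S, ?_, ?_, hfactor (hQS ▸ dvd_mul_left S Q) hS⟩
  · rw [mul_assoc, ← hQS]
    exact P.eq_C_content_mul_primPart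
  · rw [natDegree_C_mul hcont]
    exact hfactor (hQS ▸ dvd_mul_right Q S) hQ

lemma ncard_heightBox_mul_le {k l : ℕ} (hk : 1 ≤ k) (hkl : k ≤ l) {A B : ℝ} (hA : 1 ≤ A)
    (hB : 1 ≤ B) : ((heightBox k A * heightBox l B).ncard : ℝ) ≤ (9 * (A * B)) ^ (k + l) := by
  have hfin := (finite_heightBox k (zero_le_one.trans hA)).prod
    (finite_heightBox l (zero_le_one.trans hB))
  have hBAB : B ≤ A * B := le_mul_of_one_le_left (by positivity) hA
  have hcard : (heightBox k A * heightBox l B).ncard ≤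
      (heightBox k A).ncard * (heightBox l B).ncard := by
    rw [← Set.image_mul_prod, ← Set.ncard_prod]
    exact Set.ncard_image_le hfin
  obtain ⟨m, rfl⟩ := Nat.exists_eq_add_of_le hkl
  calc ((heightBox k A * heightBox (k + m) B).ncard : ℝ)
      ≤ (heightBox k A).ncard * (heightBox (k + m) B).ncard := by exact_mod_cast hcard
    _ ≤ (3 * A) ^ (k + 1) * (3 * B) ^ (k + m + 1) := by
        gcongr <;> apply ncard_heightBox_le <;> assumption
    _ = (9 * (A * B)) ^ (k + 1) * (3 * B) ^ m := by
        rw [add_right_comm, pow_add (3 * B), ← mul_assoc, ← mul_pow]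
        ring
    _ ≤ (9 * (A * B)) ^ (k + 1) * (9 * (A * B)) ^ m := by gcongr; linarith
    _ = (9 * (A * B)) ^ (k + 1 + m) := (pow_add _ _ _).symm
    _ ≤ (9 * (A * B)) ^ (k + (k + m)) :=
        pow_le_pow_right₀ (by linarith) (by omega)

/-- The polynomials of degree exactly `n` and height at most `H` that are reducible over `ℚ`. -/
def reducibleBox (n : ℕ) (H : ℝ) : Set ℤ[X] :=
  {P ∈ heightBox n H | P.natDegree = n ∧ ¬ Irreducible (P.map (Int.castRingHom ℚ))}

lemma exists_mem_heightBox_mul {n : ℕ} (hn : n ≠ 0) {H : ℝ} {P : ℤ[X]} (hP : P ∈ reducibleBox n H) :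
    ∃ k ∈ Finset.Icc 1 (n / 2), ∃ j : ℕ, 2 ^ j ≤ gelfondConst n * H ∧
      P ∈ heightBox k (2 ^ (j + 1)) * heightBox (n - k) (gelfondConst n * H / 2 ^ j) := by
  obtain ⟨⟨-, hPH⟩, rfl, hred⟩ := hP
  obtain ⟨Q, R, rfl, hQ, hR⟩ := exists_eq_mul_of_not_irreducible_map (K := ℚ) hn hred
  wlog hQR : Q.natDegree ≤ R.natDegree generalizing Q R
  · rw [mul_comm Q R] at hn hPH hred ⊢
    exact this R Q hPH hred hn hR hQ (le_of_not_ge hQR)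
  have hQ0 : Q ≠ 0 := ne_zero_of_natDegree_gt (Nat.pos_of_ne_zero hQ)
  have hR0 : R ≠ 0 := ne_zero_of_natDegree_gt (Nat.pos_of_ne_zero hR)
  have hdeg : (Q * R).natDegree = Q.natDegree + R.natDegree := natDegree_mul hQ0 hR0
  have hprod : Q.supNorm * R.supNorm ≤ gelfondConst (Q * R).natDegree * H :=
    (supNorm_mul_supNorm_le_int hQ0 hR0).trans
      (mul_le_mul_of_nonneg_left hPH (zero_le_one.trans (one_le_gelfondConst _)))
  obtain ⟨j, hj, hj'⟩ := exists_nat_pow_near (one_le_supNorm hQ0) one_lt_two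
  refine ⟨Q.natDegree, Finset.mem_Icc.2 ⟨by omega, by omega⟩, j, ?_,
    Set.mul_mem_mul ⟨le_rfl, hj'.le⟩ ⟨by omega, ?_⟩⟩
  · exact hj.trans ((le_mul_of_one_le_right Q.supNorm_nonneg (one_le_supNorm hR0)).trans hprod)
  · rw [le_div_iff₀' (by positivity)]
    exact (mul_le_mul_of_nonneg_right hj R.supNorm_nonneg).trans hprod

/-- Splitting the factorizations `P = Q * R` according to the degree of `Q` and the dyadic range of
its height leaves `O(H ^ n)` pairs in each of `O(log H)` classes. -/
lemma ncard_reducibleBox_le {n : ℕ} (hn : n ≠ 0) {H : ℝ} (hH : 1 ≤ H) :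
    ((reducibleBox n H).ncard : ℝ) ≤
      n * (Nat.log 2 ⌊gelfondConst n * H⌋₊ + 1) * (18 * (gelfondConst n * H)) ^ n := by
  set N := gelfondConst n * H
  have hN : 1 ≤ N := one_le_mul_of_one_le_of_one_le (one_le_gelfondConst n) hH
  set I := Finset.Icc 1 (n / 2) ×ˢ Finset.range (Nat.log 2 ⌊N⌋₊ + 1)
  have hI {a : ℕ × ℕ} (ha : a ∈ I) : (1 ≤ a.1 ∧ a.1 ≤ n / 2) ∧ (2 : ℝ) ^ a.2 ≤ N := by
    obtain ⟨hk, hj⟩ := Finset.mem_product.1 ha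
    refine ⟨Finset.mem_Icc.1 hk, ?_⟩
    have hpow := Nat.pow_le_of_le_log (Nat.floor_pos.2 hN).ne' (Finset.mem_range_succ_iff.1 hj)
    exact_mod_cast (Nat.le_floor_iff (zero_le_one.trans hN)).1 hpow
  have hcover : reducibleBox n H ⊆
      ⋃ a ∈ I, heightBox a.1 (2 ^ (a.2 + 1)) * heightBox (n - a.1) (N / 2 ^ a.2) := by
    intro P hP
    obtain ⟨k, hk, j, hj, hmem⟩ := exists_mem_heightBox_mul hn hP
    have hjlog : j ≤ Nat.log 2 ⌊N⌋₊ := Nat.le_log_of_pow_le one_lt_two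
      (Nat.le_floor (by exact_mod_cast hj))
    have hkj : (k, j) ∈ I := Finset.mem_product.2 ⟨hk, Finset.mem_range_succ_iff.2 hjlog⟩
    exact Set.mem_biUnion hkj hmem
  have hfin : (⋃ a ∈ I, heightBox a.1 (2 ^ (a.2 + 1)) *
      heightBox (n - a.1) (N / 2 ^ a.2)).Finite :=
    I.finite_toSet.biUnion fun a _ => (finite_heightBox _ (by positivity)).mul
      (finite_heightBox _ (by positivity))
  calc ((reducibleBox n H).ncard : ℝ)
      ≤ ∑ a ∈ I, ((heightBox a.1 (2 ^ (a.2 + 1)) *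
          heightBox (n - a.1) (N / 2 ^ a.2)).ncard : ℝ) := by
        exact_mod_cast (Set.ncard_le_ncard hcover hfin).trans (I.set_ncard_biUnion_le _)
    _ ≤ ∑ a ∈ I, (18 * N) ^ n := Finset.sum_le_sum fun a ha => by
        obtain ⟨⟨hk, hkn⟩, hj⟩ := hI ha
        have h := ncard_heightBox_mul_le hk (show a.1 ≤ n - a.1 by omega)
          (one_le_pow₀ one_le_two : (1 : ℝ) ≤ 2 ^ (a.2 + 1)) ((one_le_div (by positivity)).2 hj)
        rw [show a.1 + (n - a.1) = n by omega] at h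
        refine h.trans_eq (congrArg (· ^ n) ?_)
        field_simp
        ring
    _ = (n / 2 : ℕ) * (Nat.log 2 ⌊N⌋₊ + 1) * (18 * N) ^ n := by
        rw [Finset.sum_const, Finset.card_product, Nat.card_Icc, Finset.card_range, nsmul_eq_mul,
          Nat.add_sub_cancel]
        push_cast
        rfl
    _ ≤ n * (Nat.log 2 ⌊N⌋₊ + 1) * (18 * N) ^ n := by
        gcongr
        exact Nat.div_le_self n 2

lemma natLog_floor_const_mul_add_one_isBigO {c : ℝ} (hc : 1 ≤ c) (b : ℕ) :
    (fun H : ℕ => (Nat.log b ⌊c * H⌋₊ + 1 : ℝ)) =O[atTop] fun H : ℕ => Real.log H := by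
  have hconst (a : ℝ) : (fun _ : ℕ => a) =O[atTop] fun H : ℕ => Real.log H :=
    Real.isLittleO_const_log_atTop.isBigO.comp_tendsto tendsto_natCast_atTop_atTop
  have hlog : (fun H : ℕ => Real.log c + Real.log H) =O[atTop] fun H : ℕ => Real.log H :=
    (hconst _).add (isBigO_refl _ _)
  refine IsBigO.add (.trans (.of_bound (Real.log b)⁻¹ ?_) hlog) (hconst 1)
  filter_upwards [eventually_ge_atTop 1] with H hH
  have hH : (1 : ℝ) ≤ H := Nat.one_le_cast.2 hH
  have hcH : 1 ≤ c * H := one_le_mul_of_one_le_of_one_le hc hH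
  rw [Real.norm_natCast, ← Real.log_mul (by positivity) (by positivity),
    Real.norm_of_nonneg (Real.log_nonneg hcH), inv_mul_eq_div]
  refine (Real.natLog_le_logb _ _).trans (div_le_div_of_nonneg_right ?_ (Real.log_natCast_nonneg b))
  exact Real.log_le_log (Nat.cast_pos.2 (Nat.floor_pos.2 hcH)) (Nat.floor_le (by positivity))

theorem ncard_reducibleBox_isBigO {n : ℕ} (hn : n ≠ 0) :
    (fun H : ℕ => ((reducibleBox n H).ncard : ℝ)) =O[atTop]
      fun H : ℕ => (H : ℝ) ^ n * Real.log H := by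
  have hbound : (fun H : ℕ => ((reducibleBox n H).ncard : ℝ)) =O[atTop] fun H : ℕ =>
      (Nat.log 2 ⌊gelfondConst n * H⌋₊ + 1) * (H : ℝ) ^ n := by
    refine IsBigO.of_bound (n * (18 * gelfondConst n) ^ n) ?_
    filter_upwards [eventually_ge_atTop 1] with H hH
    rw [Real.norm_natCast, Real.norm_of_nonneg (by positivity)]
    refine (ncard_reducibleBox_le hn (Nat.one_le_cast.2 hH)).trans_eq ?_
    ring
  exact (hbound.trans ((natLog_floor_const_mul_add_one_isBigO (one_le_gelfondConst n) 2).mul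
    (isBigO_refl _ _))).congr_right fun H => mul_comm _ _

/-! ### Polynomials with non-squarefree content -/

/-- The nonzero polynomials of degree at most `n` and height at most `H` whose content is not
squarefree. -/
def nonSquarefreeContentBox (n : ℕ) (H : ℝ) : Set ℤ[X] :=
  {P ∈ heightBox n H | P ≠ 0 ∧ ¬ Squarefree P.content}

lemma exists_eq_C_sq_mul_of_not_squarefree_content {P : ℤ[X]} (hP : ¬ Squarefree P.content) :
    ∃ q : ℕ, 2 ≤ q ∧ ∃ Q : ℤ[X], P = C ((q : ℤ) ^ 2) * Q := by
  rw [← Int.squarefree_natAbs, Nat.squarefree_iff_prime_squarefree] at hP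
  push Not at hP
  obtain ⟨q, hq, hqP⟩ := hP
  refine ⟨q, hq.two_le, dvd_content_iff_C_dvd.1 ?_⟩
  rw [sq]
  exact_mod_cast Int.natCast_dvd.2 hqP

lemma exists_mem_image_heightBox {n : ℕ} {H : ℝ} {P : ℤ[X]}
    (hP : P ∈ nonSquarefreeContentBox n H) :
    ∃ q : ℕ, 2 ≤ q ∧ (q : ℝ) ^ 2 ≤ H ∧
      P ∈ (C ((q : ℤ) ^ 2) * ·) '' heightBox n (H / q ^ 2) := by
  obtain ⟨⟨hdeg, hPH⟩, hP0, hsq⟩ := hP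
  obtain ⟨q, hq, Q, rfl⟩ := exists_eq_C_sq_mul_of_not_squarefree_content hsq
  have hq0 : (q : ℤ) ^ 2 ≠ 0 := by positivity
  have hnorm : (C ((q : ℤ) ^ 2) * Q).supNorm = q ^ 2 * Q.supNorm := by
    rw [supNorm_C_mul, norm_pow, Int.norm_natCast]
  rw [hnorm] at hPH
  refine ⟨q, hq, ?_, Q, ⟨natDegree_C_mul hq0 (p := Q) ▸ hdeg, ?_⟩, rfl⟩
  · exact (le_mul_of_one_le_right (by positivity) (one_le_supNorm (right_ne_zero_of_mul hP0))).trans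
      hPH
  · rwa [le_div_iff₀' (by positivity)]

lemma ncard_heightBox_div_sq_le {n q : ℕ} (hn : n ≠ 0) (hq : 2 ≤ q) {H : ℝ}
    (hqH : (q : ℝ) ^ 2 ≤ H) :
    ((heightBox n (H / q ^ 2)).ncard : ℝ) ≤ 9 / 16 * (2 * H) ^ (n + 1) * ((q : ℝ) ^ 2)⁻¹ := by
  have hq2 : (4 : ℝ) ≤ q ^ 2 := by
    have : (2 : ℝ) ≤ q := Nat.ofNat_le_cast.2 hq
    nlinarith
  have hH : 0 ≤ H := by linarith
  have hsmall : 3 / (2 * (q : ℝ) ^ 2) ≤ 1 := (div_le_one (by positivity)).2 (by linarith)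
  calc ((heightBox n (H / q ^ 2)).ncard : ℝ)
      ≤ (3 * (H / q ^ 2)) ^ (n + 1) :=
        ncard_heightBox_le n ((one_le_div (by positivity)).2 hqH)
    _ = (2 * H) ^ (n + 1) * (3 / (2 * (q : ℝ) ^ 2)) ^ (n + 1) := by
        rw [← mul_pow]
        congr 1
        field_simp
    _ ≤ (2 * H) ^ (n + 1) * (3 / (2 * (q : ℝ) ^ 2)) ^ 2 := by
        gcongr (2 * H) ^ (n + 1) * ?_
        exact pow_le_pow_of_le_one (by positivity) hsmall (by omega)
    _ = 9 / 4 * (2 * H) ^ (n + 1) * ((q : ℝ) ^ 2)⁻¹ * ((q : ℝ) ^ 2)⁻¹ := by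
        field_simp
        ring
    _ ≤ 9 / 4 * (2 * H) ^ (n + 1) * ((q : ℝ) ^ 2)⁻¹ * 4⁻¹ := by gcongr
    _ = 9 / 16 * (2 * H) ^ (n + 1) * ((q : ℝ) ^ 2)⁻¹ := by ring

/-- The constant `9 / 16` only has to be less than `1`: there are about `(2 * H) ^ (n + 1)`
polynomials in total. -/
theorem ncard_nonSquarefreeContentBox_le {n : ℕ} (hn : n ≠ 0) {H : ℝ} (hH : 1 ≤ H) :
    ((nonSquarefreeContentBox n H).ncard : ℝ) ≤ 9 / 16 * (2 * H) ^ (n + 1) := by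
  set I := Finset.Ioc 1 ⌊√H⌋₊
  have hI {q : ℕ} : q ∈ I ↔ 2 ≤ q ∧ (q : ℝ) ^ 2 ≤ H := by
    rw [Finset.mem_Ioc, Nat.le_floor_iff H.sqrt_nonneg,
      Real.le_sqrt q.cast_nonneg (zero_le_one.trans hH)]
    rfl
  have hfin (q : ℕ) : (heightBox n (H / q ^ 2)).Finite := finite_heightBox n (by positivity)
  have hcover : nonSquarefreeContentBox n H ⊆
      ⋃ q ∈ I, (C ((q : ℤ) ^ 2) * ·) '' heightBox n (H / q ^ 2) := by
    intro P hP
    obtain ⟨q, hq, hqH, hmem⟩ := exists_mem_image_heightBox hP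
    exact Set.mem_biUnion (hI.2 ⟨hq, hqH⟩) hmem
  have hcard := (Set.ncard_le_ncard hcover (I.finite_toSet.biUnion fun q _ =>
    (hfin q).image _)).trans (I.set_ncard_biUnion_le _)
  calc ((nonSquarefreeContentBox n H).ncard : ℝ)
      ≤ ∑ q ∈ I, (((C ((q : ℤ) ^ 2) * ·) '' heightBox n (H / q ^ 2)).ncard : ℝ) :=
        (Nat.cast_le.2 hcard).trans_eq (Nat.cast_sum _ _)
    _ ≤ ∑ q ∈ I, 9 / 16 * (2 * H) ^ (n + 1) * ((q : ℝ) ^ 2)⁻¹ :=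
        Finset.sum_le_sum fun q hq => (Nat.cast_le.2 (Set.ncard_image_le (hfin q))).trans
          (ncard_heightBox_div_sq_le hn (hI.1 hq).1 (hI.1 hq).2)
    _ = 9 / 16 * (2 * H) ^ (n + 1) * ∑ q ∈ I, ((q : ℝ) ^ 2)⁻¹ := (Finset.mul_sum _ _ _).symm
    _ ≤ 9 / 16 * (2 * H) ^ (n + 1) := by
        refine mul_le_of_le_one_right (by positivity) ?_
        have hfloor : 1 ≤ ⌊√H⌋₊ := Nat.floor_pos.2 (Real.one_le_sqrt.2 hH)
        refine (sum_Ioc_inv_sq_le_sub one_ne_zero hfloor).trans ?_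
        rw [Nat.cast_one, inv_one, sub_le_self_iff]
        positivity

/-! ### The density of irreducible polynomials -/

lemma ncard_heightBox_pred_isBigO {n : ℕ} (hn : n ≠ 0) :
    (fun H : ℕ => ((heightBox (n - 1) H).ncard : ℝ)) =O[atTop]
      fun H : ℕ => (H : ℝ) ^ n * Real.log H := by
  have hpow : (fun H : ℕ => ((heightBox (n - 1) H).ncard : ℝ)) =O[atTop]
      fun H : ℕ => (H : ℝ) ^ n := by
    refine IsBigO.of_bound (3 ^ n) ?_
    filter_upwards [eventually_ge_atTop 1] with H hH
    have h := ncard_heightBox_le (n - 1) (Nat.one_le_cast.2 hH : (1 : ℝ) ≤ H)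
    rwa [Nat.sub_add_cancel (Nat.one_le_iff_ne_zero.2 hn), mul_pow, ← Real.norm_natCast,
      ← Real.norm_of_nonneg (by positivity : (0 : ℝ) ≤ (H : ℝ) ^ n)] at h
  have hlog : (fun _ : ℕ => (1 : ℝ)) =O[atTop] fun H : ℕ => Real.log H :=
    Real.isLittleO_const_log_atTop.isBigO.comp_tendsto tendsto_natCast_atTop_atTop
  simpa only [mul_one] using hpow.mul hlog

lemma ncard_heightBox_pred_union_reducibleBox_isBigO {n : ℕ} (hn : n ≠ 0) :
    (fun H : ℕ => ((heightBox (n - 1) H ∪ reducibleBox n H).ncard : ℝ)) =O[atTop]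
      fun H : ℕ => (H : ℝ) ^ n * Real.log H := by
  refine (IsBigO.of_bound 1 (Eventually.of_forall fun H => ?_)).trans
    ((ncard_heightBox_pred_isBigO hn).add (ncard_reducibleBox_isBigO hn))
  rw [one_mul, ← Nat.cast_add, Real.norm_natCast, Real.norm_natCast]
  exact_mod_cast Set.ncard_union_le _ _

lemma pow_mul_log_isLittleO (n : ℕ) :
    (fun H : ℕ => (H : ℝ) ^ n * Real.log H) =o[atTop] fun H : ℕ => (H : ℝ) ^ (n + 1) := by
  simp only [pow_succ]
  exact (isBigO_refl _ _).mul_isLittleO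
    (Real.isLittleO_log_id_atTop.comp_tendsto tendsto_natCast_atTop_atTop)

/-- The polynomials in `P2Set r` of degree exactly `r` that are irreducible over `ℚ`, which
form the set `S` of density one. -/
def irreducibleP2Set (r : ℕ) : Set ℤ[X] :=
  {P ∈ P2Set r | P.natDegree = r ∧ Irreducible (P.map (Int.castRingHom ℚ))}

variable (r H : ℕ)

lemma finite_P2Set_inter_heightLE : (P2Set r ∩ {P | HeightLE P H}).Finite :=
  (finite_heightBox r (Nat.cast_nonneg H)).subset fun P hP =>
    ⟨by have := hP.1.1; omega, heightLE_iff_supNorm_le.1 hP.2⟩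

lemma P2Set_diff_irreducibleP2Set_subset :
    (P2Set r ∩ {P | HeightLE P H}) \ (irreducibleP2Set r ∩ {P | HeightLE P H}) ⊆
      heightBox (r - 1) H ∪ reducibleBox r H := by
  rintro P ⟨⟨hP, hPH⟩, hnot⟩
  have hPH' := heightLE_iff_supNorm_le.1 hPH
  rcases hP.1 with hdeg | hdeg
  · exact Or.inr ⟨⟨hdeg.le, hPH'⟩, hdeg, fun hirr => hnot ⟨⟨hP, hdeg, hirr⟩, hPH⟩⟩
  · exact Or.inl ⟨hdeg.le, hPH'⟩

lemma heightBox_subset_P2Set_union :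
    heightBox r H ⊆ (P2Set r ∩ {P | HeightLE P H}) ∪
      (heightBox (r - 1) H ∪ reducibleBox r H) ∪ nonSquarefreeContentBox r H := by
  rintro P ⟨hdeg, hPH⟩
  rcases hdeg.lt_or_eq with hlt | heq
  · exact Or.inl (Or.inr (Or.inl ⟨Nat.le_pred_of_lt hlt, hPH⟩))
  by_cases hirr : Irreducible (P.map (Int.castRingHom ℚ))
  · have hP0 : P ≠ 0 := fun h => hirr.ne_zero (by rw [h, Polynomial.map_zero])
    by_cases hsq : Squarefree P.content
    · exact Or.inl (Or.inl ⟨⟨Or.inl heq, hP0, hirr.separable, hsq⟩,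
        heightLE_iff_supNorm_le.2 hPH⟩)
    · exact Or.inr ⟨⟨hdeg, hPH⟩, hP0, hsq⟩
  · exact Or.inl (Or.inr (Or.inr ⟨⟨hdeg, hPH⟩, heq, hirr⟩))

lemma finite_heightBox_pred_union_reducibleBox :
    (heightBox (r - 1) H ∪ reducibleBox r H).Finite :=
  (finite_heightBox _ (Nat.cast_nonneg H)).union
    ((finite_heightBox r (Nat.cast_nonneg H)).subset fun _ hP => hP.1)

lemma two_mul_pow_le_ncard_P2Set :
    (2 * H : ℝ) ^ (r + 1) ≤ (P2Set r ∩ {P | HeightLE P H}).ncard +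
      (heightBox (r - 1) H ∪ reducibleBox r H).ncard + (nonSquarefreeContentBox r H).ncard := by
  have hnonsqf : (nonSquarefreeContentBox r H).Finite :=
    (finite_heightBox r (Nat.cast_nonneg H)).subset fun _ hP => hP.1
  have hfin := ((finite_P2Set_inter_heightLE r H).union
    (finite_heightBox_pred_union_reducibleBox r H)).union hnonsqf
  have hcard := (Set.ncard_le_ncard (heightBox_subset_P2Set_union r H) hfin).trans
    ((Set.ncard_union_le _ _).trans (add_le_add_left (Set.ncard_union_le _ _) _))
  rw [ncard_heightBox r (Nat.cast_nonneg H), Nat.floor_natCast] at hcard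
  calc (2 * H : ℝ) ^ (r + 1) ≤ ((2 * H + 1) ^ (r + 1) : ℕ) := by
        push_cast
        gcongr
        exact le_add_of_nonneg_right zero_le_one
    _ ≤ _ := by exact_mod_cast hcard

variable {r}

lemma pow_isBigO_ncard_P2Set (hr : r ≠ 0) :
    (fun H : ℕ => (H : ℝ) ^ (r + 1)) =O[atTop]
      fun H : ℕ => ((P2Set r ∩ {P | HeightLE P H}).ncard : ℝ) := by
  set p : ℕ → ℝ := fun H => (P2Set r ∩ {P | HeightLE P H}).ncard
  set b : ℕ → ℝ := fun H => (heightBox (r - 1) H ∪ reducibleBox r H).ncard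
  have hb : b =o[atTop] fun H : ℕ => (H : ℝ) ^ (r + 1) :=
    (ncard_heightBox_pred_union_reducibleBox_isBigO hr).trans_isLittleO (pow_mul_log_isLittleO r)
  have hpb : (fun H : ℕ => (H : ℝ) ^ (r + 1)) =O[atTop] fun H => p H + b H := by
    refine IsBigO.of_bound (16 / 7) ?_
    filter_upwards [eventually_ge_atTop 1] with H hH
    have hlower := two_mul_pow_le_ncard_P2Set r H
    have hnonsqf := ncard_nonSquarefreeContentBox_le hr (Nat.one_le_cast.2 hH : (1 : ℝ) ≤ H)
    have hmono : (H : ℝ) ^ (r + 1) ≤ (2 * H : ℝ) ^ (r + 1) := by gcongr; linarith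
    rw [Real.norm_of_nonneg (by positivity), Real.norm_of_nonneg (by positivity)]
    simp only [p, b]
    linarith
  exact hpb.trans ((hb.trans_isBigO hpb).right_isBigO_sub.congr_right fun H =>
    add_sub_cancel_right _ _)

lemma one_sub_ncard_div_ncard {α : Type*} {s t : Set α} (hst : s ⊆ t) (ht : t.Finite)
    (ht₀ : t.ncard ≠ 0) :
    (1 : ℝ) - (s.ncard : ℝ) / t.ncard = (t \ s).ncard / t.ncard := by
  rw [← Set.ncard_sdiff_add_ncard_of_subset hst ht] at ht₀ ⊢
  field_simp
  push_cast
  ring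

theorem one_sub_ncard_irreducibleP2Set_div_isBigO (hr : r ≠ 0) :
    (fun H : ℕ => (1 : ℝ) - ((irreducibleP2Set r ∩ {P | HeightLE P H}).ncard : ℝ) /
        ((P2Set r ∩ {P | HeightLE P H}).ncard : ℝ)) =O[atTop]
      fun H : ℕ => Real.log H / H := by
  set p : ℕ → Set ℤ[X] := fun H => P2Set r ∩ {P | HeightLE P H}
  set s : ℕ → Set ℤ[X] := fun H => irreducibleP2Set r ∩ {P | HeightLE P H}
  have hs (H : ℕ) : s H ⊆ p H := Set.inter_subset_inter_left _ (Set.sep_subset _ _)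
  have hdiff : (fun H => ((p H \ s H).ncard : ℝ)) =O[atTop]
      fun H : ℕ => (H : ℝ) ^ r * Real.log H := by
    refine (IsBigO.of_bound 1 (Eventually.of_forall fun H => ?_)).trans
      (ncard_heightBox_pred_union_reducibleBox_isBigO hr)
    rw [one_mul, Real.norm_natCast, Real.norm_natCast]
    exact_mod_cast Set.ncard_le_ncard (P2Set_diff_irreducibleP2Set_subset r H)
      (finite_heightBox_pred_union_reducibleBox r H)
  have hlower := pow_isBigO_ncard_P2Set hr
  have hne : ∀ᶠ H : ℕ in atTop, (H : ℝ) ^ (r + 1) ≠ 0 :=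
    (eventually_ne_atTop 0).mono fun H hH => by positivity
  refine (hdiff.mul (hlower.inv_rev (hne.mono fun _ h h0 => absurd h0 h))).congr' ?_ ?_
  · filter_upwards [hne, hlower.eq_zero_imp] with H hH h0
    rw [one_sub_ncard_div_ncard (hs H) (finite_P2Set_inter_heightLE r H)
      fun h => hH (h0 (Nat.cast_eq_zero.2 h)), div_eq_mul_inv]
  · filter_upwards [eventually_ne_atTop 0] with H hH
    field_simp
    ring

lemma log_div_isBigO_log_div_sqrt :
    (fun H : ℕ => Real.log H / H) =O[atTop] fun H : ℕ => Real.log H / √H := by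
  refine IsBigO.of_bound 1 ?_
  filter_upwards [eventually_ge_atTop 1] with H hH
  have hH : (1 : ℝ) ≤ H := Nat.one_le_cast.2 hH
  rw [one_mul, norm_div, norm_div, Real.norm_natCast, Real.norm_of_nonneg (Real.sqrt_nonneg _)]
  gcongr
  exact Real.sqrt_le_self_iff.2 (Or.inr hH)

end

theorem stmt1 (r : ℕ) (hr : 0 < r) (hre : Even r) :
    ∃ S ⊆ P2Set r,
      ((fun H : ℕ => (1 : ℝ) -
          ((S ∩ {P | HeightLE P H}).ncard : ℝ) /
            ((P2Set r ∩ {P | HeightLE P H}).ncard : ℝ)) =O[atTop]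
        fun H : ℕ => Real.log H / Real.sqrt H) ∧
      ∀ P ∈ S, ∃ α : ℝ, 0 < α ∧ α < 1 ∧
        (fun x : ℕ =>
            ({d : ℤ | SqfInt d ∧ |d| ≤ (x : ℤ) ∧
              ((∃ t₀ : ℚ, Polynomial.aeval t₀ P ≠ 0 ∧
                  ∃ s : ℚ, s ≠ 0 ∧ (d : ℚ) * Polynomial.aeval t₀ P = s ^ 2) ∨
               (P.natDegree = r ∧
                  ∃ s : ℚ, s ≠ 0 ∧ (d : ℚ) * (P.leadingCoeff : ℚ) = s ^ 2))}.ncard : ℝ))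
          =O[atTop] fun x : ℕ => (x : ℝ) * Real.log x ^ (-α) := by
  refine ⟨irreducibleP2Set r, Set.sep_subset _ _,
    (one_sub_ncard_irreducibleP2Set_div_isBigO hr.ne').trans log_div_isBigO_log_div_sqrt, ?_⟩
  rintro P ⟨-, rfl, hirr⟩
  simpa only [IsSpecialization, hre, true_and] using
    exists_ncard_isSpecialization_isBigO hirr hr hre
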